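/- arXiv:1706.01645 — 7 statements merged into one kernel-verified Lean document; each statement's English description precedes it below -/
import Mathlib

section
/- Let G be a finite group, K a subgroup of index 2 in G, and H ≤ K a subgroup whose core in G is trivial (⋂_{g ∈ G} g⁻¹Hg = 1). Let L ≤ H with L normal in K. Then for every a ∈ G with a ∉ K: L ∩ L^a = 1, every element of L commutes with every element of L^a := a⁻¹La, and the product LL^a = L × L^a is a normal subgroup of G. -/
open Pointwise

/-- If `K` has index `2` in `G`, `H ≤ K` has trivial core in `G`, and `L ≤ H` is normal
in `K`, then for `a ∉ K` the conjugate `L^a = a⁻¹La` satisfies `L ∩ L^a = 1`, elements of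
`L` and `L^a` commute, and `LL^a = L × L^a` is a normal subgroup of `G`. -/
theorem stmt_12 {G : Type*} [Group G] [Finite G] (K H L : Subgroup G)
    (hK : K.index = 2) (hHK : H ≤ K)
    (hcore : ∀ x : G, (∀ g : G, g * x * g⁻¹ ∈ H) → x = 1)
    (hLH : L ≤ H) (hLK : ∀ k ∈ K, ∀ x ∈ L, k⁻¹ * x * k ∈ L)
    (a : G) (ha : a ∉ K) :
    L ⊓ Subgroup.map (MulAut.conj a⁻¹).toMonoidHom L = ⊥ ∧
    (∀ x ∈ L, ∀ y ∈ Subgroup.map (MulAut.conj a⁻¹).toMonoidHom L, x * y = y * x) ∧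
    (L : Set G) * (Subgroup.map (MulAut.conj a⁻¹).toMonoidHom L : Set G) =
      ((L ⊔ Subgroup.map (MulAut.conj a⁻¹).toMonoidHom L : Subgroup G) : Set G) ∧
    (L ⊔ Subgroup.map (MulAut.conj a⁻¹).toMonoidHom L).Normal := by
  have hKn : K.Normal := Subgroup.normal_of_index_eq_two hK
  have hmul : ∀ g h : G, g ∉ K → h ∉ K → g * h ∈ K := fun g h hg hh =>
    (Subgroup.mul_mem_iff_of_index_two hK).2 (by tauto)
  have hmem : ∀ y : G, y ∈ Subgroup.map (MulAut.conj a⁻¹).toMonoidHom L ↔ a * y * a⁻¹ ∈ L := by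
    intro y
    constructor
    · rintro ⟨x, hx, rfl⟩
      have : a * (MulAut.conj a⁻¹).toMonoidHom x * a⁻¹ = x := by
        simp [MulAut.conj_apply, mul_assoc]
      rw [this]
      exact hx
    · intro h
      exact ⟨_, h, by simp [MulAut.conj_apply, mul_assoc]⟩
  generalize Subgroup.map (MulAut.conj a⁻¹).toMonoidHom L = M at hmem ⊢
  have hL : ∀ k ∈ K, ∀ x ∈ L, k * x * k⁻¹ ∈ L := by
    intro k hk x hx
    simpa using hLK k⁻¹ (K.inv_mem hk) x hx
  have hM : ∀ k ∈ K, ∀ x ∈ M, k * x * k⁻¹ ∈ M := by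
    intro k hk x hx
    rw [hmem] at hx ⊢
    have := hL _ (hKn.conj_mem k hk a) _ hx
    convert this using 1
    group
  have hLM : ∀ g, g ∉ K → ∀ x ∈ L, g * x * g⁻¹ ∈ M := by
    intro g hg x hx
    rw [hmem]
    have := hL _ (hmul a g ha hg) _ hx
    convert this using 1
    group
  have hML : ∀ g, g ∉ K → ∀ x ∈ M, g * x * g⁻¹ ∈ L := by
    intro g hg x hx
    rw [hmem] at hx
    have := hL _ (hmul g a⁻¹ hg (by simpa using ha)) _ hx
    convert this using 1
    group
  have hMK : M ≤ K := by
    intro y hy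
    have := hKn.conj_mem _ (hHK (hLH ((hmem y).1 hy))) a⁻¹
    convert this using 1
    group
  have hbot : ∀ x, x ∈ L → x ∈ M → x = 1 := by
    intro x hx hy
    refine hcore x fun g => hLH ?_
    by_cases hg : g ∈ K
    · exact hL g hg x hx
    · exact hML g hg x hy
  have hcomm : ∀ x ∈ L, ∀ y ∈ M, x * y = y * x := by
    intro x hx y hy
    have h : x * y * x⁻¹ * y⁻¹ = 1 := by
      apply hbot
      · have := L.mul_mem hx (hL y (hMK hy) _ (L.inv_mem hx))
        convert this using 1
        group
      · exact M.mul_mem (hM x (hHK (hLH hx)) y hy) (M.inv_mem hy)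
    rw [mul_inv_eq_one, mul_inv_eq_iff_eq_mul] at h
    exact h
  refine ⟨?_, hcomm, ?_, ?_⟩
  · rw [eq_bot_iff]
    rintro x ⟨hx, hy⟩
    exact Subgroup.mem_bot.2 (hbot x hx hy)
  · apply Set.Subset.antisymm
    · rintro _ ⟨x, hx, y, hy, rfl⟩
      exact Subgroup.mul_mem_sup hx hy
    · let S : Subgroup G :=
        { carrier := (L : Set G) * (M : Set G)
          one_mem' := ⟨1, L.one_mem, 1, M.one_mem, by simp⟩
          mul_mem' := by
            rintro _ _ ⟨x, hx, y, hy, rfl⟩ ⟨z, hz, w, hw, rfl⟩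
            refine ⟨x * z, L.mul_mem hx hz, y * w, M.mul_mem hy hw, ?_⟩
            have := hcomm z hz y hy
            change x * z * (y * w) = x * y * (z * w)
            rw [mul_assoc, ← mul_assoc z, this]
            group
          inv_mem' := by
            rintro _ ⟨x, hx, y, hy, rfl⟩
            refine ⟨x⁻¹, L.inv_mem hx, y⁻¹, M.inv_mem hy, ?_⟩
            change x⁻¹ * y⁻¹ = (x * y)⁻¹
            rw [hcomm x hx y hy]
            group }
      have : L ⊔ M ≤ S := sup_le (fun x hx => ⟨x, hx, 1, M.one_mem, by simp⟩)
        (fun y hy => ⟨1, L.one_mem, y, hy, by simp⟩)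
      exact this
  · refine ⟨fun n hn g => ?_⟩
    have : L ⊔ M ≤ (L ⊔ M).comap (MulAut.conj g).toMonoidHom := by
      refine sup_le (fun x hx => ?_) (fun x hx => ?_)
      · change g * x * g⁻¹ ∈ L ⊔ M
        by_cases hg : g ∈ K
        · exact Subgroup.mem_sup_left (hL g hg x hx)
        · exact Subgroup.mem_sup_right (hLM g hg x hx)
      · change g * x * g⁻¹ ∈ L ⊔ M
        by_cases hg : g ∈ K
        · exact Subgroup.mem_sup_right (hM g hg x hx)
        · exact Subgroup.mem_sup_left (hML g hg x hx)
    exact this hn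
end

section
/- Let p be an odd prime, let (G, H, T) be a faithful RCC loop folder of order 2p with ⟨T⟩ = G, and let K be a subgroup of G with H ≤ K ≤ G, |G : K| = 2 and |K : H| = p. Set T₁ := T ∩ K, K₁ := ⟨T₁⟩ and H₁ := H ∩ K₁. Then |H₁| ∈ {1, p}, and K₁ is elementary abelian of order p or p² (that is, K₁ is abelian, x^p = 1 for every x ∈ K₁, and |K₁| = p·|H₁| ∈ {p, p²}). -/
open Subgroup in
theorem aux_fact {X : Type*} [Group X] [Finite X] (H A B : Subgroup X) (h : A ≤ B)
    (he : H.relIndex A = H.relIndex B) : ∀ b ∈ B, ∃ a ∈ A, a⁻¹ * b ∈ H := by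
  intro b hb
  have hs : Function.Surjective (quotientSubgroupOfEmbeddingOfLE H h) := by
    refine ((Nat.bijective_iff_injective_and_card _).2
      ⟨(quotientSubgroupOfEmbeddingOfLE H h).injective, he⟩).2
  obtain ⟨q, hq⟩ := hs (QuotientGroup.mk ⟨b, hb⟩)
  induction q using QuotientGroup.induction_on with
  | H a =>
    rw [quotientSubgroupOfEmbeddingOfLE_apply_mk, QuotientGroup.eq] at hq
    exact ⟨a, a.2, by simpa [mem_subgroupOf] using hq⟩

open Subgroup in
theorem aux_fact' {X : Type*} [Group X] [Finite X] (H A B : Subgroup X) (h : A ≤ B)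
    (hf : ∀ b ∈ B, ∃ a ∈ A, a⁻¹ * b ∈ H) : H.relIndex A = H.relIndex B := by
  refine Nat.card_congr (Equiv.ofBijective (quotientSubgroupOfEmbeddingOfLE H h)
    ⟨(quotientSubgroupOfEmbeddingOfLE H h).injective, ?_⟩)
  intro q
  induction q using QuotientGroup.induction_on with
  | H b =>
    obtain ⟨a, ha, hab⟩ := hf b b.2
    refine ⟨QuotientGroup.mk ⟨a, ha⟩, ?_⟩
    rw [quotientSubgroupOfEmbeddingOfLE_apply_mk, QuotientGroup.eq]
    simpa [mem_subgroupOf] using hab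

theorem aux_cent {X : Type*} [Group X] [Finite X] (p : ℕ) (T : Set X)
    (h1 : (1 : X) ∈ T) (hc : ∀ t ∈ T, ∀ g : X, g⁻¹ * t * g ∈ T) (hT : Nat.card T ≤ p)
    (t : X) (ht : t ∈ T) (ht1 : t ≠ 1) : (Subgroup.centralizer {t}).index < p := by
  have hlt : Nat.card (T \ {1} : Set X) < Nat.card T := by
    rw [Nat.card_coe_set_eq, Nat.card_coe_set_eq]
    exact Set.ncard_sdiff_singleton_lt_of_mem h1 (Set.toFinite _)
  refine lt_of_le_of_lt ?_ (lt_of_lt_of_le hlt hT)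
  let f : X ⧸ Subgroup.centralizer {t} → (T \ {1} : Set X) := fun q =>
    ⟨q.out * t * q.out⁻¹, by simpa using hc t ht q.out⁻¹, by
      simpa [conj_eq_one_iff] using ht1⟩
  refine Nat.card_le_card_of_injective f ?_
  intro q q' h
  have h' : q.out * t * q.out⁻¹ = q'.out * t * q'.out⁻¹ := congrArg Subtype.val h
  rw [← QuotientGroup.out_eq' q, ← QuotientGroup.out_eq' q', QuotientGroup.eq,
    Subgroup.mem_centralizer_singleton_iff]
  have e : t * (q.out⁻¹ * q'.out) = q.out⁻¹ * (q.out * t * q.out⁻¹) * q'.out := by group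
  have e2 : q.out⁻¹ * q'.out * t = q.out⁻¹ * (q'.out * t * q'.out⁻¹) * q'.out := by group
  first
    | rw [e, e2, h']
    | (rw [eq_comm, e, e2, h'])

open Subgroup in
theorem aux_core {X : Type*} [Group X] [Finite X] (p : ℕ) (hp : p.Prime) (L : Subgroup X)
    (hL : L.index = p) (t : X) (htL : t ∉ L) (hC : (centralizer {t}).index < p) :
    L.relIndex (centralizer {t}) = p ∧ L ⊓ centralizer {t} ≤ L.normalCore := by
  set C := centralizer {t} with hCdef
  have htC : t ∈ C := by rw [hCdef, mem_centralizer_singleton_iff]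
  have hC0 : C.index ≠ 0 := index_ne_zero_of_finite
  have hle : L.relIndex C ≤ p := by
    rw [← hL, ← relIndex_top_right L]
    exact relIndex_le_of_le_right le_top (by rw [relIndex_top_right, hL]; exact hp.ne_zero)
  have hrel : L.relIndex C = p := by
    have a1 := relIndex_mul_index (inf_le_right : L ⊓ C ≤ C)
    have a2 := relIndex_mul_index (inf_le_left : L ⊓ C ≤ L)
    rw [inf_relIndex_right] at a1
    have hd : p ∣ L.relIndex C * C.index := by
      rw [a1, ← a2, hL]; exact dvd_mul_left _ _
    rcases hp.dvd_mul.1 hd with h | h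
    · refine le_antisymm hle (Nat.le_of_dvd (Nat.pos_of_ne_zero ?_) h)
      rw [relIndex]; exact index_ne_zero_of_finite
    · exact absurd (Nat.le_of_dvd (Nat.pos_of_ne_zero hC0) h) (by omega)
  refine ⟨hrel, ?_⟩
  have hfac := aux_fact L C ⊤ le_top (by rw [hrel, relIndex_top_right, hL])
  -- C normalizes L ⊓ C
  set D := L ⊓ C with hD
  have htn : t ∈ normalizer (D : Set X) := by
    rw [mem_normalizer_iff]
    intro h
    constructor
    · intro hh
      have : h * t = t * h := by
        have := (mem_centralizer_singleton_iff).1 hh.2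
        first | exact this | exact this.symm
      rw [← this]; simpa using hh
    · intro hh
      have : (t * h * t⁻¹) * t = t * (t * h * t⁻¹) := by
        have := (mem_centralizer_singleton_iff).1 hh.2
        first | exact this | exact this.symm
      have h2 : h = t * h * t⁻¹ := by
        have h3 : t * h = t * (t * h * t⁻¹) := by rw [← this]; group
        exact mul_left_cancel h3
      rw [h2]; exact hh
  have hE : C ≤ normalizer (D : Set X) ⊓ C := by
    have m := relIndex_mul_relIndex D (normalizer (D : Set X) ⊓ C) C
      (le_inf le_normalizer inf_le_right) inf_le_right
    have hDC : D.relIndex C = p := by rw [hD, inf_relIndex_right, hrel]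
    rw [hDC] at m
    rcases (Nat.dvd_prime hp).1 (Dvd.intro_left _ m) with h | h
    · exact relIndex_eq_one.1 h
    · have : D.relIndex (normalizer (D : Set X) ⊓ C) = 1 := by
        rw [h] at m
        exact Nat.eq_of_mul_eq_mul_right hp.pos (by omega)
      exact absurd ((relIndex_eq_one.1 this) ⟨htn, htC⟩).1 htL
  intro d hd g
  obtain ⟨c, hc, hcg⟩ := hfac g⁻¹ trivial
  have hcn := (hE (C.inv_mem hc)).1
  have h1 : c⁻¹ * d * c⁻¹⁻¹ ∈ D := (mem_normalizer_iff.1 hcn d).1 hd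
  have h2 := L.mul_mem (L.mul_mem (L.inv_mem hcg) h1.1) hcg
  have : g * d * g⁻¹ = (c⁻¹ * g⁻¹)⁻¹ * (c⁻¹ * d * c⁻¹⁻¹) * (c⁻¹ * g⁻¹) := by group
  rw [this]; exact h2

open Subgroup in
theorem aux_normal {X : Type*} [Group X] [Finite X] (p : ℕ) (hp : p.Prime) (L : Subgroup X)
    (hL : L.index = p) (T : Set X)
    (h1 : (1 : X) ∈ T) (hc : ∀ t ∈ T, ∀ g : X, g⁻¹ * t * g ∈ T) (hT : Nat.card T ≤ p)
    (hgen : closure T = ⊤) (hTL : ∀ t ∈ T, t ∈ L → t = 1) : L.Normal := by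
  set N := L.normalCore with hN
  have hNL : N ≤ L := normalCore_le L
  let M : X → Subgroup X := fun t => centralizer {t} ⊔ N
  have hM : ∀ t ∈ T, t ≠ 1 → (M t).index < p ∧ N.relIndex (M t) = p := by
    intro t ht ht1
    have hci := aux_cent p T h1 hc hT t ht ht1
    obtain ⟨hr, hle⟩ := aux_core p hp L hL t (fun h => ht1 (hTL t ht h)) hci
    constructor
    · exact lt_of_le_of_lt (Nat.le_of_dvd (Nat.pos_of_ne_zero index_ne_zero_of_finite)
        (index_dvd_of_le le_sup_left)) hci
    · show N.relIndex (centralizer {t} ⊔ N) = p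
      rw [relIndex_sup_right, ← hr, ← inf_relIndex_right, ← inf_relIndex_right L]
      congr 1
      exact le_antisymm (inf_le_inf_right _ hNL) (le_inf hle inf_le_right)
  obtain ⟨t, ht, ht1⟩ : ∃ t ∈ T, t ≠ 1 := by
    by_contra! hcon
    have : closure T = ⊥ := (closure_eq_bot_iff).2 hcon
    rw [this] at hgen
    have : L = ⊤ := by rw [eq_top_iff, ← hgen]; exact bot_le
    rw [this, index_top] at hL
    exact hp.ne_one hL.symm
  have hsub : ∀ s ∈ T, s ∈ M t := by
    intro s hs
    by_cases hs1 : s = 1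
    · rw [hs1]; exact one_mem _
    obtain ⟨i1, r1⟩ := hM t ht ht1
    obtain ⟨i2, r2⟩ := hM s hs hs1
    have hsM : s ∈ M s := mem_sup_left (by rw [mem_centralizer_singleton_iff])
    have m := relIndex_mul_relIndex N (M t ⊓ M s) (M s)
      (le_inf le_sup_right le_sup_right) inf_le_right
    rw [r2, inf_relIndex_right] at m
    rcases (Nat.dvd_prime hp).1 (Dvd.intro_left _ m) with h | h
    · exact relIndex_eq_one.1 h hsM
    · have : (M t).relIndex (M s) ≤ (M t).index := by
        rw [← relIndex_top_right (M t)]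
        exact relIndex_le_of_le_right le_top
          (by rw [relIndex_top_right]; exact index_ne_zero_of_finite)
      omega
  have hMt : M t = ⊤ := by
    rw [eq_top_iff, ← hgen, closure_le]; exact hsub
  have hNi : N.index = p := by
    rw [← (hM t ht ht1).2, hMt, relIndex_top_right]
  have m := relIndex_mul_index hNL
  rw [hNi, hL] at m
  have : N.relIndex L = 1 := Nat.eq_of_mul_eq_mul_right hp.pos (by omega)
  have : L = N := le_antisymm (relIndex_eq_one.1 this) hNL
  rw [this, hN]; infer_instance

theorem aux_quot {X : Type*} [Group X] [Finite X] (p : ℕ) (hp : p.Prime) (L : Subgroup X)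
    [L.Normal] (hL : L.index = p) :
    (∀ a b : X, a * b * a⁻¹ * b⁻¹ ∈ L) ∧ ∀ x : X, x ^ p ∈ L := by
  have := Fact.mk hp
  have hcard : Nat.card (X ⧸ L) = p := hL
  have : IsCyclic (X ⧸ L) := isCyclic_of_prime_card hcard
  constructor
  · intro a b
    rw [← QuotientGroup.eq_one_iff]
    have : (a : X ⧸ L) * b = b * a := IsCyclic.isMulCommutative.is_comm.comm _ _
    rw [QuotientGroup.mk_mul, QuotientGroup.mk_mul, QuotientGroup.mk_mul, this,
      QuotientGroup.mk_inv, QuotientGroup.mk_inv]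
    group
  · intro x
    rw [← QuotientGroup.eq_one_iff, ← hcard, QuotientGroup.mk_pow]
    exact pow_card_eq_one'


/-- A loop folder `(G, H, T)`: `T` contains `1` and is a transversal for the right cosets
of every conjugate `H^g = g⁻¹Hg` of `H` in `G` (note `H^g x = H^g t ↔ g*(x*t⁻¹)*g⁻¹ ∈ H`). -/
def IsLoopFolder {G : Type*} [Group G] (H : Subgroup G) (T : Set G) : Prop :=
  (1 : G) ∈ T ∧ ∀ g x : G, ∃! t, t ∈ T ∧ g * (x * t⁻¹) * g⁻¹ ∈ H

/-- The loop folder is right conjugacy closed: `T` is invariant under conjugation by `G`. -/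
def IsRCC {G : Type*} [Group G] (T : Set G) : Prop :=
  ∀ t ∈ T, ∀ g : G, g⁻¹ * t * g ∈ T

/-- The loop folder is faithful: the core `⋂_{g ∈ G} g⁻¹Hg` of `H` in `G` is trivial. -/
def IsFaithfulFolder {G : Type*} [Group G] (H : Subgroup G) : Prop :=
  ∀ x : G, (∀ g : G, g * x * g⁻¹ ∈ H) → x = 1

/-- With `K₁ := ⟨T ∩ K⟩` and `H₁ := H ⊓ K₁`: `|H₁| ∈ {1, p}` and `K₁` is elementary
abelian of order `p` or `p²`, with `|K₁| = p·|H₁|`. -/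
theorem stmt_13 {G : Type*} [Group G] [Finite G] (p : ℕ) (hp : p.Prime) (hodd : Odd p)
    (H K : Subgroup G) (T : Set G)
    (hLF : IsLoopFolder H T) (hRCC : IsRCC T) (hFaith : IsFaithfulFolder H)
    (hord : Nat.card T = 2 * p) (hgen : Subgroup.closure T = ⊤)
    (hHK : H ≤ K) (hGK : K.index = 2) (hKH : H.relIndex K = p) :
    (Nat.card (H ⊓ Subgroup.closure (T ∩ (K : Set G)) : Subgroup G) = 1 ∨
      Nat.card (H ⊓ Subgroup.closure (T ∩ (K : Set G)) : Subgroup G) = p) ∧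
    (∀ a ∈ Subgroup.closure (T ∩ (K : Set G)), ∀ b ∈ Subgroup.closure (T ∩ (K : Set G)),
      a * b = b * a) ∧
    (∀ x ∈ Subgroup.closure (T ∩ (K : Set G)), x ^ p = 1) ∧
    Nat.card (Subgroup.closure (T ∩ (K : Set G))) =
      p * Nat.card (H ⊓ Subgroup.closure (T ∩ (K : Set G)) : Subgroup G) := by
  have hKn : K.Normal := Subgroup.normal_of_index_eq_two hGK
  obtain ⟨h1T, huniq⟩ := hLF
  have hinj : ∀ s ∈ T, ∀ t ∈ T, s * t⁻¹ ∈ H → s = t := by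
    intro s hs t ht hst
    exact (huniq 1 s).unique ⟨hs, by simp⟩ ⟨ht, by simpa using hst⟩
  have hTH : ∀ t ∈ T, t ∈ H → t = 1 := fun t ht h => hinj t ht 1 h1T (by simpa using h)
  have hcard : Nat.card (T ∩ (K : Set G) : Set G) ≤ p := by
    rw [← hKH]
    let f : (T ∩ (K : Set G) : Set G) → K ⧸ H.subgroupOf K := fun t =>
      QuotientGroup.mk (⟨t.1, t.2.2⟩⁻¹ : K)
    refine Nat.card_le_card_of_injective f ?_
    intro s t hst
    have := QuotientGroup.eq.1 hst
    exact Subtype.ext (hinj s s.2.1 t t.2.1 (by simpa [Subgroup.mem_subgroupOf] using this))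
  have hcl : ∀ t ∈ T ∩ (K : Set G), ∀ g : G, g⁻¹ * t * g ∈ T ∩ (K : Set G) := by
    intro t ht g
    refine ⟨hRCC t ht.1 g, ?_⟩
    simpa using hKn.conj_mem t ht.2 g⁻¹
  have hpre : Subgroup.closure
      (Subtype.val ⁻¹' (T ∩ (K : Set G)) : Set (Subgroup.closure (T ∩ (K : Set G)))) = ⊤ :=
    Subgroup.closure_closure_coe_preimage
  have hsub : T ∩ (K : Set G) ⊆ Subgroup.closure (T ∩ (K : Set G)) := Subgroup.subset_closure
  have h1K : (1 : G) ∈ T ∩ (K : Set G) := ⟨h1T, K.one_mem⟩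
  have hK1K : Subgroup.closure (T ∩ (K : Set G)) ≤ K :=
    (Subgroup.closure_le K).2 Set.inter_subset_right
  have hK1n : ∀ x ∈ Subgroup.closure (T ∩ (K : Set G)), ∀ g : G,
      g * x * g⁻¹ ∈ Subgroup.closure (T ∩ (K : Set G)) := by
    intro x hx g
    induction hx using Subgroup.closure_induction with
    | mem x hx => exact hsub (by simpa using hcl x hx g⁻¹)
    | one => simpa using Subgroup.one_mem _
    | mul x y _ _ hx hy =>
      have : g * (x * y) * g⁻¹ = (g * x * g⁻¹) * (g * y * g⁻¹) := by group
      rw [this]; exact Subgroup.mul_mem _ hx hy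
    | inv x _ hx =>
      have : g * x⁻¹ * g⁻¹ = (g * x * g⁻¹)⁻¹ := by group
      rw [this]; exact Subgroup.inv_mem _ hx
  set T₁ := T ∩ (K : Set G) with hT₁
  set K₁ := Subgroup.closure T₁ with hK₁
  have hfac : ∀ b ∈ K, ∃ a ∈ K₁, a⁻¹ * b ∈ H := by
    intro b hb
    obtain ⟨t, ⟨ht, htb⟩, -⟩ := huniq 1 b⁻¹
    have htb' : t * b ∈ H := by
      have := H.inv_mem htb
      simpa using this
    have htK : t ∈ K := by
      have := K.mul_mem (hHK htb') (K.inv_mem hb)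
      simpa using this
    exact ⟨t⁻¹, K₁.inv_mem (hsub ⟨ht, htK⟩), by simpa using htb'⟩
  have hrel : H.relIndex K₁ = p := by rw [aux_fact' H K₁ K hK1K hfac, hKH]
  have hnorm : (H.subgroupOf K₁).Normal := by
    refine aux_normal p hp (H.subgroupOf K₁) hrel (Subtype.val ⁻¹' T₁ : Set K₁) h1K ?_ ?_ hpre ?_
    · intro t ht g
      exact hcl t ht g
    · refine le_trans ?_ hcard
      exact Nat.card_le_card_of_injective
        (fun t : (Subtype.val ⁻¹' T₁ : Set K₁) => (⟨t.1.1, t.2⟩ : T₁))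
        (fun a b h => Subtype.ext (Subtype.ext (Subtype.mk.inj h)))
    · intro t ht htH
      exact Subtype.ext (hTH t ht.1 htH)
  obtain ⟨hcom, hpow⟩ := aux_quot p hp (H.subgroupOf K₁) hrel
  have hcom' : ∀ a ∈ K₁, ∀ b ∈ K₁, a * b * a⁻¹ * b⁻¹ ∈ H := fun a ha b hb =>
    hcom ⟨a, ha⟩ ⟨b, hb⟩
  have hpow' : ∀ a ∈ K₁, a ^ p ∈ H := fun a ha => hpow ⟨a, ha⟩
  have hcomm : ∀ a ∈ K₁, ∀ b ∈ K₁, a * b = b * a := by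
    intro a ha b hb
    have : a * b * a⁻¹ * b⁻¹ = 1 := by
      apply hFaith
      intro g
      have := hcom' _ (hK1n a ha g) _ (hK1n b hb g)
      have e : g * (a * b * a⁻¹ * b⁻¹) * g⁻¹ =
        (g * a * g⁻¹) * (g * b * g⁻¹) * (g * a * g⁻¹)⁻¹ * (g * b * g⁻¹)⁻¹ := by group
      rw [e]; exact this
    have := mul_inv_eq_one.1 this
    rwa [mul_inv_eq_iff_eq_mul] at this
  have hcardK : Nat.card K₁ = p * Nat.card (H ⊓ K₁ : Subgroup G) := by
    have h := Subgroup.card_mul_index (H.subgroupOf K₁)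
    have e : Nat.card (H.subgroupOf K₁) = Nat.card (H ⊓ K₁ : Subgroup G) := by
      rw [← Subgroup.inf_subgroupOf_right]
      exact Nat.card_congr (Subgroup.subgroupOfEquivOfLe inf_le_right).toEquiv
    have e2 : (H.subgroupOf K₁).index = p := hrel
    rw [e, e2] at h
    rw [← h, mul_comm]
  refine ⟨?_, hcomm, ?_, hcardK⟩
  · -- a second conjugate of `H`
    obtain ⟨g, hg⟩ : ∃ g, g ∉ K := by
      by_contra! hcon
      have : K = ⊤ := (Subgroup.eq_top_iff' K).2 hcon
      rw [this, Subgroup.index_top] at hGK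
      omega
    let c : K₁ →* K₁ :=
      { toFun := fun x => ⟨g * x * g⁻¹, hK1n x x.2 g⟩
        map_one' := by ext; simp
        map_mul' := fun x y => by ext; simp }
    have hcs : Function.Surjective c := by
      intro y
      refine ⟨⟨g⁻¹ * y * g, by simpa using hK1n y y.2 g⁻¹⟩, ?_⟩
      ext
      show g * (g⁻¹ * y * g) * g⁻¹ = y
      group
    set A := H.subgroupOf K₁ with hA
    have hAn : (A.comap c).Normal := hnorm.comap c
    have hAi : (A.comap c).index = p := by
      rw [Subgroup.index_comap_of_surjective _ hcs]; exact hrel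
    have hbot : A.comap c ⊓ A = ⊥ := by
      rw [eq_bot_iff]
      rintro x ⟨hx1, hx2⟩
      rw [Subgroup.mem_bot]
      have hx1' : g * x * g⁻¹ ∈ H := hx1
      have hx2' : (x : G) ∈ H := hx2
      apply Subtype.ext
      apply hFaith
      have hconj : ∀ y ∈ K₁, y ∈ H → ∀ k ∈ K, k * y * k⁻¹ ∈ H := by
        intro y hy hyH k hk
        obtain ⟨a, ha, hak⟩ := hfac k⁻¹ (K.inv_mem hk)
        have e : k * y * k⁻¹ = (a⁻¹ * k⁻¹)⁻¹ * (a⁻¹ * y * a) * (a⁻¹ * k⁻¹) := by group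
        have e2 : a⁻¹ * y * a = y := by
          rw [mul_assoc, hcomm y hy a ha]; group
        rw [e, e2]
        exact H.mul_mem (H.mul_mem (H.inv_mem hak) hyH) hak
      intro k
      by_cases hk : k ∈ K
      · exact hconj x x.2 hx2' k hk
      · have hkg : k * g⁻¹ ∈ K := by
          rw [Subgroup.mul_mem_iff_of_index_two hGK]
          simp [hk, hg]
        have := hconj _ (hK1n x x.2 g) hx1' _ hkg
        have e : k * x * k⁻¹ = (k * g⁻¹) * (g * x * g⁻¹) * (k * g⁻¹)⁻¹ := by group
        rw [e]; exact this
    have hd : (A.comap c).relIndex A ∣ p := by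
      rw [← hAi]; exact Subgroup.relIndex_dvd_index_of_normal _ _
    rw [← Subgroup.inf_relIndex_right, hbot, Subgroup.relIndex_bot_left] at hd
    have e : Nat.card A = Nat.card (H ⊓ K₁ : Subgroup G) := by
      rw [hA, ← Subgroup.inf_subgroupOf_right]
      exact Nat.card_congr (Subgroup.subgroupOfEquivOfLe inf_le_right).toEquiv
    rw [e] at hd
    exact (Nat.dvd_prime hp).1 hd
  · intro x hx
    apply hFaith
    intro g
    rw [← conj_pow]
    exact hpow' _ (hK1n x hx g)
end

section
/- Let p be an odd prime, let (G, H, T) be a faithful RCC loop folder of order 2p with ⟨T⟩ = G, and let K be a subgroup of G with H ≤ K ≤ G, |G : K| = 2 and |K : H| = p. Suppose H ≠ 1 and H is normal in K. Then |H| = p, and there exists an element a ∈ G \ K with a² = 1 such that K is the internal direct product of H and H^a (i.e., H ∩ H^a = 1 and HH^a = K); in particular, G is isomorphic to the wreath product C_p ≀ C_2. -/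
open Pointwise

/-- The base group `C_p × C_p` of the wreath product, written multiplicatively. -/
abbrev CpCp (p : ℕ) := Multiplicative (ZMod p) × Multiplicative (ZMod p)

/-- The factor-swapping automorphism of `C_p × C_p`. -/
def swapAut (p : ℕ) : MulAut (CpCp p) := (MulEquiv.prodComm : CpCp p ≃* CpCp p)

/-- The action of `C_2` on `C_p × C_p` in which the nontrivial element swaps the factors. -/
def wreathAction (p : ℕ) : Multiplicative (ZMod 2) →* MulAut (CpCp p) where
  toFun x := if Multiplicative.toAdd x = 0 then 1 else swapAut p
  map_one' := by simp
  map_mul' a b := by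
    have h2 : ∀ x : ZMod 2, x = 0 ∨ x = 1 := by decide
    have hswap : swapAut p * swapAut p = 1 := by
      ext x : 1
      simp [swapAut]
    have h11 : (1 : ZMod 2) + 1 = 0 := by decide
    have h10 : (1 : ZMod 2) ≠ 0 := by decide
    rcases h2 (Multiplicative.toAdd a) with ha | ha <;>
      rcases h2 (Multiplicative.toAdd b) with hb | hb <;>
      simp [toAdd_mul, ha, hb, h11, h10, hswap]

/-- The wreath product `C_p ≀ C_2 = (C_p × C_p) ⋊ C_2`, where the nontrivial element of
`C_2` swaps the two factors. -/
abbrev WreathCpC2 (p : ℕ) := SemidirectProduct (CpCp p) (Multiplicative (ZMod 2)) (wreathAction p)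

lemma aux_disj {G : Type*} [Group G] (H K : Subgroup G) (hFaith : IsFaithfulFolder H)
    (hGK : K.index = 2) (hHnorm : ∀ k ∈ K, ∀ x ∈ H, k⁻¹ * x * k ∈ H) (a : G) (ha : a ∉ K)
    (x : G) (hx : x ∈ H) (hx' : a * x * a⁻¹ ∈ H) : x = 1 := by
  apply hFaith
  intro g
  by_cases hg : g ∈ K
  · have := hHnorm g⁻¹ (K.inv_mem hg) x hx
    simpa using this
  · have hk : g * a⁻¹ ∈ K := by
      rw [Subgroup.mul_mem_iff_of_index_two hGK]
      simp [ha, hg]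
    have := hHnorm (g * a⁻¹)⁻¹ (K.inv_mem hk) _ hx'
    convert this using 1
    group

lemma aux_comm {G : Type*} [Group G] (H K : Subgroup G) (hFaith : IsFaithfulFolder H)
    (hGK : K.index = 2) (hHK : H ≤ K)
    (hHnorm : ∀ k ∈ K, ∀ x ∈ H, k⁻¹ * x * k ∈ H) (a : G) (ha : a ∉ K)
    (x y : G) (hx : x ∈ H) (hy : y ∈ H) : x * (a⁻¹ * y * a) = (a⁻¹ * y * a) * x := by
  have hn : K.Normal := Subgroup.normal_of_index_eq_two hGK
  have hyK : a⁻¹ * y * a ∈ K := by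
    have := hn.conj_mem y (hHK hy) a⁻¹
    simpa using this
  have haxK : a * x * a⁻¹ ∈ K := hn.conj_mem x (hHK hx) a
  have h1 : x * ((a⁻¹ * y * a) * x⁻¹ * (a⁻¹ * y * a)⁻¹) = 1 := by
    apply aux_disj H K hFaith hGK hHnorm a ha
    · apply H.mul_mem hx
      have := hHnorm _ (K.inv_mem hyK) _ (H.inv_mem hx)
      simpa only [inv_inv] using this
    · have := hHnorm _ (K.inv_mem haxK) _ hy
      have := H.mul_mem this (H.inv_mem hy)
      convert this using 1
      group
  have h2 : x * (a⁻¹ * y * a) * x⁻¹ * (a⁻¹ * y * a)⁻¹ = 1 := by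
    simpa only [mul_assoc] using h1
  rw [mul_inv_eq_one, mul_inv_eq_iff_eq_mul] at h2
  exact h2

lemma aux_card {G : Type*} [Group G] [Finite G] (p : ℕ) (hp : p.Prime)
    (H K : Subgroup G) (hFaith : IsFaithfulFolder H)
    (hHK : H ≤ K) (hGK : K.index = 2) (hKH : H.relIndex K = p)
    (hHne : H ≠ ⊥) (hHnorm : ∀ k ∈ K, ∀ x ∈ H, k⁻¹ * x * k ∈ H) : Nat.card H = p := by
  obtain ⟨g, hg⟩ : ∃ g, g ∉ K := by
    by_contra! h
    have : K = ⊤ := (Subgroup.eq_top_iff' K).2 h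
    simp [this] at hGK
  have hn : K.Normal := Subgroup.normal_of_index_eq_two hGK
  have hN : (H.subgroupOf K).Normal := by
    constructor
    intro x hx k
    have := hHnorm _ (K.inv_mem k.2) _ hx
    simpa [Subgroup.mem_subgroupOf] using this
  -- map H to K / H via h ↦ g⁻¹ h g
  let f : H →* K ⧸ (H.subgroupOf K) := (QuotientGroup.mk' _).comp
    { toFun := fun h => (⟨g * h * g⁻¹, hn.conj_mem _ (hHK h.2) g⟩ : K)
      map_one' := by ext; simp
      map_mul' := by intro x y; ext; simp }
  have hf : Function.Injective f := by
    rw [injective_iff_map_eq_one]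
    intro x hx
    have : g * x * g⁻¹ ∈ H := by
      simpa [f, QuotientGroup.eq_one_iff, Subgroup.mem_subgroupOf] using hx
    exact Subtype.ext (aux_disj H K hFaith hGK hHnorm g hg x x.2 this)
  have hd := Subgroup.card_dvd_of_injective f hf
  have : Nat.card (K ⧸ (H.subgroupOf K)) = p := hKH
  rw [this] at hd
  rcases (Nat.dvd_prime hp).1 hd with h | h
  · exact absurd (Subgroup.card_eq_one.1 h) hHne
  · exact h

/-- If `H ≠ 1` is normal in `K`, then `|H| = p` and there is `a ∈ G \\ K` with `a² = 1`
such that `K = H × H^a`; in particular `G ≅ C_p ≀ C_2`. -/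
theorem stmt_14 {G : Type*} [Group G] [Finite G] (p : ℕ) (hp : p.Prime) (hodd : Odd p)
    (H K : Subgroup G) (T : Set G)
    (hLF : IsLoopFolder H T) (hRCC : IsRCC T) (hFaith : IsFaithfulFolder H)
    (hord : Nat.card T = 2 * p) (hgen : Subgroup.closure T = ⊤)
    (hHK : H ≤ K) (hGK : K.index = 2) (hKH : H.relIndex K = p)
    (hHne : H ≠ ⊥) (hHnorm : ∀ k ∈ K, ∀ x ∈ H, k⁻¹ * x * k ∈ H) :
    Nat.card H = p ∧
    (∃ a : G, a ∉ K ∧ a ^ 2 = 1 ∧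
      H ⊓ Subgroup.map (MulAut.conj a⁻¹).toMonoidHom H = ⊥ ∧
      (H : Set G) * (Subgroup.map (MulAut.conj a⁻¹).toMonoidHom H : Set G) = (K : Set G)) ∧
    Nonempty (G ≃* WreathCpC2 p) := by
  have hcard := aux_card p hp H K hFaith hHK hGK hKH hHne hHnorm
  have hcK : Nat.card K = p * p := by
    have h := Subgroup.relIndex_mul_relIndex ⊥ H K bot_le hHK
    rw [Subgroup.relIndex_bot_left, Subgroup.relIndex_bot_left, hKH, hcard] at h
    exact h.symm
  have hcG : Nat.card G = p * p * 2 := by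
    rw [← Subgroup.card_mul_index K, hcK, hGK]
  have : Fact p.Prime := ⟨hp⟩
  obtain ⟨a, ha⟩ : ∃ a : G, orderOf a = 2 := by
    have : Fact (Nat.Prime 2) := ⟨Nat.prime_two⟩
    exact exists_prime_orderOf_dvd_card' 2 (by rw [hcG]; exact dvd_mul_left _ _)
  have ha2 : a ^ 2 = 1 := by rw [← ha]; exact pow_orderOf_eq_one a
  have haa : a * a = 1 := by rw [← pow_two]; exact ha2
  have hainv : a⁻¹ = a := inv_eq_of_mul_eq_one_left haa
  have haK : a ∉ K := by
    intro h
    have h1 := Subgroup.orderOf_dvd_natCard K h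
    rw [ha, hcK] at h1
    have : Odd (p * p) := hodd.mul hodd
    exact (Nat.not_even_iff_odd.2 this) (even_iff_two_dvd.2 h1)
  have hn : K.Normal := Subgroup.normal_of_index_eq_two hGK
  have hcZ : Nat.card (Multiplicative (ZMod p)) = p := by simp
  let e : Multiplicative (ZMod p) ≃* H := mulEquivOfPrimeCardEq hcZ hcard
  have hcomm : ∀ x y : Multiplicative (ZMod p),
      (e x : G) * (a⁻¹ * e y * a) = (a⁻¹ * e y * a) * e x := fun x y =>
    aux_comm H K hFaith hGK hHK hHnorm a haK _ _ (e x).2 (e y).2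
  let f1 : CpCp p →* G :=
    { toFun := fun x => (e x.1 : G) * (a⁻¹ * e x.2 * a)
      map_one' := by simp
      map_mul' := by
        intro x y
        have := hcomm y.1 x.2
        simp only [Prod.fst_mul, Prod.snd_mul, map_mul, Subgroup.coe_mul]
        calc (e x.1 : G) * e y.1 * (a⁻¹ * (e x.2 * e y.2) * a)
            = e x.1 * (e y.1 * (a⁻¹ * e x.2 * a)) * (a⁻¹ * e y.2 * a) := by group
          _ = _ := by rw [this]; group }
  let f2 : Multiplicative (ZMod 2) →* G :=
    { toFun := fun x => if Multiplicative.toAdd x = 0 then 1 else a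
      map_one' := by simp
      map_mul' := by
        intro x y
        have h2 : ∀ x : ZMod 2, x = 0 ∨ x = 1 := by decide
        have h11 : (1 : ZMod 2) + 1 = 0 := by decide
        have h10 : (1 : ZMod 2) ≠ 0 := by decide
        rcases h2 (Multiplicative.toAdd x) with hx | hx <;>
          rcases h2 (Multiplicative.toAdd y) with hy | hy <;>
          simp [toAdd_mul, hx, hy, h11, h10, haa] }
  have hf1 : ∀ x, f1 x = (e x.1 : G) * (a⁻¹ * e x.2 * a) := fun _ => rfl
  have hf2 : ∀ x, f2 x = if Multiplicative.toAdd x = 0 then 1 else a := fun _ => rfl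
  have hf1K : ∀ x, f1 x ∈ K := by
    intro x
    rw [hf1]
    refine K.mul_mem (hHK (e x.1).2) ?_
    have := hn.conj_mem _ (hHK (e x.2).2) a⁻¹
    simpa using this
  let f : WreathCpC2 p →* G := SemidirectProduct.lift f1 f2 (by
    intro g
    ext1 x
    by_cases hg : Multiplicative.toAdd g = 0
    · have hs : (wreathAction p) g = 1 := if_pos hg
      simp [hf2, hg, hs]
    · have := hcomm x.2 x.1
      have hs : (wreathAction p) g = swapAut p := if_neg hg
      have hs2 : swapAut p x = (x.2, x.1) := rfl
      simp only [MonoidHom.comp_apply, MulEquiv.coe_toMonoidHom, hs, hs2, hf1, hf2, hg, if_false,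
        MulAut.conj_apply]
      rw [this, hainv]
      simp only [mul_assoc, haa, mul_one])
  have hf : ∀ w, f w = f1 w.left * f2 w.right := fun w => rfl
  have hfK : ∀ w, f w ∈ K → Multiplicative.toAdd w.right = 0 := by
    intro w hw
    by_contra h
    rw [hf, hf2, if_neg h] at hw
    exact haK ((Subgroup.mul_mem_cancel_left K (hf1K _)).1 hw)
  have hinj : Function.Injective f := by
    rw [injective_iff_map_eq_one]
    intro w hw
    have h0 := hfK w (by rw [hw]; exact K.one_mem)
    rw [hf, hf2, if_pos h0, mul_one, hf1] at hw
    have hy : (e w.left.1 : G) = 1 := by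
      apply aux_disj H K hFaith hGK hHnorm a haK _ (e w.left.1).2
      rw [eq_inv_of_mul_eq_one_left hw]
      have := H.inv_mem (e w.left.2).2
      convert this using 1
      group
    have hz : (e w.left.2 : G) = 1 := by
      rw [hy, one_mul] at hw
      have : (e w.left.2 : G) = a * (a⁻¹ * e w.left.2 * a) * a⁻¹ := by group
      rw [this, hw]; simp
    have hy' : w.left.1 = 1 := by simpa using hy
    have hz' : w.left.2 = 1 := by simpa using hz
    refine SemidirectProduct.ext (Prod.ext hy' hz') ?_
    exact Multiplicative.toAdd.injective h0
  have hcW : Nat.card (WreathCpC2 p) = p * p * 2 := by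
    rw [SemidirectProduct.card]
    simp
  have : Finite (WreathCpC2 p) := Finite.of_injective f hinj
  have hbij : Function.Bijective f :=
    (Nat.bijective_iff_injective_and_card f).2 ⟨hinj, by rw [hcW, hcG]⟩
  have hmem : ∀ y, y ∈ Subgroup.map (MulAut.conj a⁻¹).toMonoidHom H ↔
      ∃ x ∈ H, a⁻¹ * x * a = y := by
    intro y
    simp [Subgroup.mem_map]
  refine ⟨hcard, ⟨a, haK, ha2, ?_, ?_⟩, ⟨(MulEquiv.ofBijective f hbij).symm⟩⟩
  · rw [eq_bot_iff]
    rintro x ⟨hx, hx'⟩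
    obtain ⟨y, hy, rfl⟩ := (hmem x).1 hx'
    rw [Subgroup.mem_bot]
    apply aux_disj H K hFaith hGK hHnorm a haK _ hx
    convert hy using 1
    group
  · ext k
    rw [Set.mem_mul]
    constructor
    · rintro ⟨x, hx, y, hy, rfl⟩
      obtain ⟨z, hz, rfl⟩ := (hmem y).1 hy
      refine K.mul_mem (hHK hx) ?_
      have := hn.conj_mem _ (hHK hz) a⁻¹
      simpa using this
    · intro hk
      obtain ⟨w, rfl⟩ := hbij.2 k
      have h0 := hfK w hk
      refine ⟨e w.left.1, (e w.left.1).2, _, (hmem _).2 ⟨e w.left.2, (e w.left.2).2, rfl⟩, ?_⟩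
      rw [hf, hf2, if_pos h0, mul_one, hf1]
end

section
/- Let p be an odd prime, let (G, H, T) be a faithful RCC loop folder of order 2p with ⟨T⟩ = G, and let K be a subgroup of G with H ≤ K ≤ G, |G : K| = 2 and |K : H| = p. Set T₁ := T ∩ K, K₁ := ⟨T₁⟩ and H₁ := H ∩ K₁. Assume that H ≠ 1 and that every s ∈ T with s ∉ K commutes with every element of K₁. Then H₁ = 1, K₁ is contained in the center of G, and G is isomorphic to the wreath product C_p ≀ C_2. -/
theorem aux_two : ∀ c : Multiplicative (ZMod 2), c = 1 ∨ Multiplicative.toAdd c = 1 := by decide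

theorem aux_two_ne : ¬ Multiplicative.toAdd (1 : Multiplicative (ZMod 2)) = 1 := by decide

theorem aux_swap (p : ℕ) (c : Multiplicative (ZMod 2)) (hc : Multiplicative.toAdd c = 1)
    (a b : Multiplicative (ZMod p)) : wreathAction p c (a, b) = (b, a) := by
  have h : wreathAction p c = swapAut p := if_neg (by rw [hc]; decide)
  rw [h]
  rfl

theorem aux_iso {G : Type*} [Group G] [Finite G] (p : ℕ) (hp : p.Prime)
    (H K : Subgroup G) (hHK : H ≤ K) (t : G) (ht : orderOf t = 2) (htK : t ∉ K)
    (hKn : K.Normal) (hH : Nat.card H = p) (hG : Nat.card G = p * p * 2)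
    (hc : ∀ x ∈ H, ∀ y ∈ H, Commute x (t * y * t⁻¹))
    (hd : ∀ x ∈ H, t * x * t⁻¹ ∈ H → x = 1) : Nonempty (G ≃* WreathCpC2 p) := by
  have : Fact p.Prime := ⟨hp⟩
  have ht2 : t * t = 1 := by
    have := pow_orderOf_eq_one t
    rwa [ht, pow_two] at this
  have hti : t⁻¹ = t := inv_eq_of_mul_eq_one_left ht2
  have cZ : ∀ n : ℕ, Nat.card (Multiplicative (ZMod n)) = n := fun n => by
    rw [Nat.card_congr Multiplicative.toAdd, Nat.card_zmod]
  let e : Multiplicative (ZMod p) ≃* H := mulEquivOfPrimeCardEq (p := p) (cZ p) hH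
  have : Fact (Nat.Prime 2) := ⟨Nat.prime_two⟩
  let e2 : Multiplicative (ZMod 2) ≃* Subgroup.zpowers t :=
    mulEquivOfPrimeCardEq (p := 2) (cZ 2) (by rw [Nat.card_zpowers, ht])
  let f1 : Multiplicative (ZMod p) →* G := H.subtype.comp e.toMonoidHom
  let f2 : Multiplicative (ZMod p) →* G := (MulAut.conj t).toMonoidHom.comp f1
  have f1H : ∀ a, f1 a ∈ H := fun a => (e a).2
  have f2e : ∀ a, f2 a = t * f1 a * t⁻¹ := fun a => rfl
  have f1i : Function.Injective f1 := Subtype.val_injective.comp e.injective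
  let f : CpCp p →* G := MonoidHom.noncommCoprod f1 f2
    (fun a b => by rw [f2e]; exact hc _ (f1H a) _ (f1H b))
  have fe : ∀ a b, f (a, b) = f1 a * f2 b := fun a b => rfl
  let g : Multiplicative (ZMod 2) →* G := (Subgroup.zpowers t).subtype.comp e2.toMonoidHom
  have gi : Function.Injective g := Subtype.val_injective.comp e2.injective
  have h2 : ∀ c : Multiplicative (ZMod 2), c = 1 ∨ Multiplicative.toAdd c = 1 := aux_two
  have gt : ∀ c : Multiplicative (ZMod 2), Multiplicative.toAdd c = 1 → g c = t := by
    intro c hcc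
    have hne : g c ≠ 1 := by
      intro h
      have : c = 1 := gi (by rw [h, map_one])
      subst this
      exact absurd hcc aux_two_ne
    obtain ⟨k, hk⟩ := Subgroup.mem_zpowers_iff.1 (e2 c).2
    have hk' : t ^ k = g c := hk
    rcases Int.even_or_odd' k with ⟨m, rfl | rfl⟩
    · exfalso; apply hne; rw [← hk', zpow_mul]
      have : t ^ (2:ℤ) = 1 := by rw [zpow_two, ht2]
      rw [this, one_zpow]
    · rw [← hk', zpow_add, zpow_mul]
      have : t ^ (2:ℤ) = 1 := by rw [zpow_two, ht2]
      rw [this, one_zpow, one_mul, zpow_one]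
  let Φ : WreathCpC2 p →* G := SemidirectProduct.lift f g (by
    intro c
    ext x : 1
    obtain ⟨a, b⟩ := x
    rcases h2 c with rfl | hcc
    · simp
    · have hsw : wreathAction p c (a, b) = (b, a) := aux_swap p c hcc a b
      simp only [MonoidHom.comp_apply, MulEquiv.coe_toMonoidHom, hsw, gt c hcc, fe, f2e,
        MulAut.conj_apply]
      have := hc _ (f1H b) _ (f1H a)
      rw [this.eq, hti]
      have q : ∀ u : G, t * (t * u) = u := fun u => by rw [← mul_assoc, ht2, one_mul]
      simp only [mul_assoc, q, ht2, mul_one])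
  have Φe : ∀ a b c, Φ ⟨(a, b), c⟩ = f1 a * (t * f1 b * t⁻¹) * g c := fun a b c => rfl
  have Φi : Function.Injective Φ := by
    rw [injective_iff_map_eq_one]
    rintro ⟨⟨a, b⟩, c⟩ h
    rw [Φe] at h
    have hK : f1 a * (t * f1 b * t⁻¹) ∈ K :=
      K.mul_mem (hHK (f1H a)) (hKn.conj_mem _ (hHK (f1H b)) t)
    have hc1 : c = 1 := by
      rcases h2 c with h' | h'
      · exact h'
      · rw [gt c h'] at h
        exfalso; apply htK
        rw [← inv_mem_iff (x := t), ← eq_inv_of_mul_eq_one_left h]; exact hK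
    subst hc1
    rw [map_one, mul_one] at h
    have hb : f1 b = 1 := by
      apply hd _ (f1H b)
      rw [eq_inv_of_mul_eq_one_right h]
      exact H.inv_mem (f1H a)
    have ha : f1 a = 1 := by simpa [hb] using h
    have ha' : a = 1 := f1i (by rw [ha, map_one])
    have hb' : b = 1 := f1i (by rw [hb, map_one])
    subst ha' hb'
    rfl
  have hcard : Nat.card (WreathCpC2 p) = Nat.card G := by
    rw [SemidirectProduct.card, Nat.card_prod, cZ, cZ, hG]
  have : Finite (WreathCpC2 p) := Finite.of_injective _ Φi
  exact ⟨(MulEquiv.ofBijective Φ ((Nat.bijective_iff_injective_and_card Φ).2 ⟨Φi, hcard⟩)).symm⟩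

/-- Case 1: if `H ≠ 1` and every `s ∈ T \\ K` commutes with all of `K₁ := ⟨T ∩ K⟩`, then
`H₁ = H ⊓ K₁ = 1`, `K₁ ≤ Z(G)`, and `G ≅ C_p ≀ C_2`. -/
theorem stmt_15 {G : Type*} [Group G] [Finite G] (p : ℕ) (hp : p.Prime) (hodd : Odd p)
    (H K : Subgroup G) (T : Set G)
    (hLF : IsLoopFolder H T) (hRCC : IsRCC T) (hFaith : IsFaithfulFolder H)
    (hord : Nat.card T = 2 * p) (hgen : Subgroup.closure T = ⊤)
    (hHK : H ≤ K) (hGK : K.index = 2) (hKH : H.relIndex K = p)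
    (hHne : H ≠ ⊥)
    (hcomm : ∀ s ∈ T, s ∉ K → ∀ x ∈ Subgroup.closure (T ∩ (K : Set G)), s * x = x * s) :
    H ⊓ Subgroup.closure (T ∩ (K : Set G)) = ⊥ ∧
    Subgroup.closure (T ∩ (K : Set G)) ≤ Subgroup.center G ∧
    Nonempty (G ≃* WreathCpC2 p) := by
  obtain ⟨h1T, hT⟩ := hLF
  have hKn : K.Normal := Subgroup.normal_of_index_eq_two hGK
  have : Fact p.Prime := ⟨hp⟩
  set K₁ := Subgroup.closure (T ∩ (K : Set G)) with hK1
  have hT1 : ∀ t ∈ T, t ∈ K → t ∈ K₁ := fun t h h' => Subgroup.subset_closure ⟨h, h'⟩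
  have hK1K : K₁ ≤ K := (Subgroup.closure_le _).2 fun x hx => hx.2
  -- s
  obtain ⟨s, hsT, hsK⟩ : ∃ s ∈ T, s ∉ K := by
    by_contra! h
    have : K = ⊤ := top_le_iff.1 (hgen ▸ (Subgroup.closure_le K).2 h)
    rw [this, Subgroup.index_top] at hGK
    omega
  -- K = H T₁
  have hdec : ∀ k ∈ K, ∃ h ∈ H, ∃ t ∈ K₁, k = h * t := by
    intro k hk
    obtain ⟨t, ⟨htT, htH⟩, -⟩ := hT 1 k
    have htH : k * t⁻¹ ∈ H := by simpa using htH
    have htK : t ∈ K := by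
      have := K.mul_mem (K.inv_mem (hHK htH)) hk
      simpa using this
    exact ⟨_, htH, t, hT1 t htT htK, by group⟩
  have hGdec : ∀ g : G, g ∈ K ∨ g * s ∈ K := by
    intro g
    by_cases hg : g ∈ K
    · exact Or.inl hg
    · right
      rw [Subgroup.mul_mem_iff_of_index_two hGK]
      tauto
  let M : Subgroup G := Subgroup.centralizer (T ∩ (K : Set G)) ⊓ K
  have hMmem : ∀ m, m ∈ M ↔ (∀ t ∈ T, t ∈ K → t * m = m * t) ∧ m ∈ K := by
    intro m
    simp only [M, Subgroup.mem_inf, Subgroup.mem_centralizer_iff]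
    constructor
    · rintro ⟨a, b⟩; exact ⟨fun t h h' => a t ⟨h, h'⟩, b⟩
    · rintro ⟨a, b⟩; exact ⟨fun t h => a t h.1 h.2, b⟩
  have hMc : ∀ m ∈ M, ∀ x ∈ K₁, m * x = x * m := by
    intro m hm x hx
    have : K₁ ≤ Subgroup.centralizer {m} := by
      rw [hK1, Subgroup.closure_le]
      rintro t ⟨h, h'⟩
      rw [SetLike.mem_coe, Subgroup.mem_centralizer_singleton_iff]
      exact (((hMmem m).1 hm).1 t h h')
    exact ((Subgroup.mem_centralizer_singleton_iff).1 (this hx)).symm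
  have hMn : M.Normal := by
    constructor
    intro m hm g
    rw [hMmem] at hm ⊢
    refine ⟨fun t h h' => ?_, hKn.conj_mem _ hm.2 g⟩
    have h1 := hm.1 _ (hRCC t h g) (by simpa using hKn.conj_mem _ h' g⁻¹)
    calc t * (g * m * g⁻¹) = g * ((g⁻¹ * t * g) * m) * g⁻¹ := by group
      _ = g * (m * (g⁻¹ * t * g)) * g⁻¹ := by rw [h1]
      _ = _ := by group
  have hMH : ¬ M ≤ H := by
    intro hle
    have hM1 : ∀ m ∈ M, m = 1 := fun m hm => hFaith m fun g => hle (hMn.conj_mem m hm g)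
    obtain ⟨x, hxK, hxH⟩ : ∃ x ∈ K, x ∉ H := by
      by_contra! h
      have : H.relIndex K = 1 := Subgroup.relIndex_eq_one.2 h
      rw [this] at hKH
      exact hp.one_lt.ne hKH
    obtain ⟨t, ⟨htT, htH⟩, -⟩ := hT 1 (x * s)
    have htH : x * s * t⁻¹ ∈ H := by simpa using htH
    have htK : t ∉ K := by
      intro h
      apply hsK
      have := K.mul_mem (K.mul_mem (K.inv_mem hxK) (hHK htH)) h
      simpa [mul_assoc] using this
    have hm : s * t⁻¹ ∈ M := by
      rw [hMmem]
      refine ⟨fun u h h' => ?_, ?_⟩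
      · have c1 : Commute u s := (hcomm s hsT hsK u (hT1 u h h')).symm
        have c2 : Commute u t := (hcomm t htT htK u (hT1 u h h')).symm
        exact (c1.mul_right c2.inv_right).eq
      · rw [Subgroup.mul_mem_iff_of_index_two hGK, inv_mem_iff]
        tauto
    have := hM1 _ hm
    rw [mul_assoc, this, mul_one] at htH
    exact hxH htH
  have hMHK : K ≤ H ⊔ M := by
    have h1 : H.relIndex (H ⊔ M) * (H ⊔ M).relIndex K = H.relIndex K :=
      Subgroup.relIndex_mul_relIndex _ _ _ le_sup_left (sup_le hHK inf_le_right)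
    rw [hKH] at h1
    rcases hp.eq_one_or_self_of_dvd _ (Dvd.intro _ h1) with h | h
    · exact absurd (le_sup_right.trans (Subgroup.relIndex_eq_one.1 h)) hMH
    · rw [h] at h1
      exact Subgroup.relIndex_eq_one.1 (Nat.eq_of_mul_eq_mul_left hp.pos (by rw [h1, mul_one]))
  have hH1 : H ⊓ K₁ = ⊥ := by
    rw [Subgroup.eq_bot_iff_forall]
    rintro x ⟨hxH, hx1⟩
    have hKx : ∀ k ∈ K, k * x * k⁻¹ ∈ H := by
      intro k hk
      obtain ⟨h, hh, m, hm, rfl⟩ := Subgroup.mem_sup_of_normal_right.1 (hMHK hk)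
      have := hMc m hm x hx1
      have e : h * m * x * (h * m)⁻¹ = h * x * h⁻¹ := by
        rw [mul_assoc h, this]; group
      rw [e]
      exact H.mul_mem (H.mul_mem hh hxH) (H.inv_mem hh)
    apply hFaith
    intro g
    rcases hGdec g with h | h
    · exact hKx g h
    · have := hKx _ h
      have e : g * s * x * (g * s)⁻¹ = g * x * g⁻¹ := by
        rw [mul_assoc g, hcomm s hsT hsK x hx1]; group
      rwa [e] at this
  have hcompl : Subgroup.IsComplement' (H.subgroupOf K) (K₁.subgroupOf K) := by
    apply Subgroup.isComplement'_of_disjoint_and_mul_eq_univ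
    · rw [Subgroup.disjoint_def]
      intro x hx hy
      have : (x : G) ∈ H ⊓ K₁ := ⟨hx, hy⟩
      rw [hH1, Subgroup.mem_bot] at this
      exact Subtype.ext this
    · rw [Set.eq_univ_iff_forall]
      rintro ⟨k, hk⟩
      obtain ⟨h, hh, t, ht, rfl⟩ := hdec k hk
      exact ⟨⟨h, hHK hh⟩, hh, ⟨t, hK1K ht⟩, ht, rfl⟩
  have hcK1 : Nat.card K₁ = p := by
    have h := hcompl.symm.index_eq_card
    rw [Nat.card_congr (Subgroup.subgroupOfEquivOfLe hK1K).toEquiv] at h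
    rw [← h]; exact hKH
  have hcomm1 : ∀ x ∈ K₁, ∀ y ∈ K₁, x * y = y * x := by
    have : IsCyclic K₁ := isCyclic_of_prime_card hcK1
    intro x hx y hy
    have := (IsCyclic.isMulCommutative (α := K₁)).is_comm.comm ⟨x, hx⟩ ⟨y, hy⟩
    exact congrArg Subtype.val this
  have hcen : K₁ ≤ Subgroup.center G := by
    intro x hx
    have : (⊤ : Subgroup G) ≤ Subgroup.centralizer {x} := by
      rw [← hgen, Subgroup.closure_le]
      intro t ht
      rw [SetLike.mem_coe, Subgroup.mem_centralizer_singleton_iff]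
      by_cases htK : t ∈ K
      · exact hcomm1 _ (hT1 t ht htK) _ hx
      · exact hcomm t ht htK x hx
    rw [Subgroup.mem_center_iff]
    intro g
    exact (Subgroup.mem_centralizer_singleton_iff.1 (this (Subgroup.mem_top g)))
  refine ⟨hH1, hcen, ?_⟩
  have hHn : ∀ k ∈ K, ∀ h ∈ H, k * h * k⁻¹ ∈ H := by
    intro k hk h hh
    obtain ⟨a, ha, t, ht, rfl⟩ := hdec k hk
    have := Subgroup.mem_center_iff.1 (hcen ht) h
    have e : a * t * h * (a * t)⁻¹ = a * h * a⁻¹ := by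
      rw [mul_assoc a, ← this]; group
    rw [e]
    exact H.mul_mem (H.mul_mem ha hh) (H.inv_mem ha)
  -- disjointness
  have hdis : ∀ t, t ∉ K → ∀ x ∈ H, t * x * t⁻¹ ∈ H → x = 1 := by
    intro t htK x hx hxt
    apply hFaith
    intro g
    by_cases hg : g ∈ K
    · exact hHn g hg x hx
    · have hgt : g * t⁻¹ ∈ K := by
        rw [Subgroup.mul_mem_iff_of_index_two hGK, inv_mem_iff]; tauto
      have := hHn _ hgt _ hxt
      have e : g * t⁻¹ * (t * x * t⁻¹) * (g * t⁻¹)⁻¹ = g * x * g⁻¹ := by group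
      rwa [e] at this
  have hHn' : (H.subgroupOf K).Normal := ⟨fun n hn g => hHn g g.2 n hn⟩
  have hcH : Nat.card H = p := by
    let φ : H →* K := 
      { toFun := fun x => ⟨s * x * s⁻¹, hKn.conj_mem _ (hHK x.2) s⟩
        map_one' := by ext; simp
        map_mul' := fun x y => by ext; simp [mul_assoc] }
    let ψ : H →* K ⧸ (H.subgroupOf K) := (QuotientGroup.mk' _).comp φ
    have hψ : Function.Injective ψ := by
      rw [injective_iff_map_eq_one]
      intro x hx
      have : φ x ∈ H.subgroupOf K := (QuotientGroup.eq_one_iff _).1 hx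
      exact Subtype.ext (hdis s hsK x x.2 this)
    have hd := Subgroup.card_dvd_of_injective ψ hψ
    have hq : Nat.card (K ⧸ (H.subgroupOf K)) = p := hKH
    rw [hq] at hd
    rcases hp.eq_one_or_self_of_dvd _ hd with h | h
    · exact absurd (Subgroup.card_eq_one.1 h) hHne
    · exact h
  have hcK : Nat.card K = p * p := by
    have := (H.subgroupOf K).card_mul_index
    rw [Nat.card_congr (Subgroup.subgroupOfEquivOfLe hHK).toEquiv, hcH] at this
    have h2 : (H.subgroupOf K).index = p := hKH
    rw [← this, h2]
  have hcG : Nat.card G = p * p * 2 := by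
    rw [← K.card_mul_index, hcK, hGK]
  have : Fact (Nat.Prime 2) := ⟨Nat.prime_two⟩
  obtain ⟨t, ht⟩ := exists_prime_orderOf_dvd_card' (G := G) 2 (hcG ▸ Dvd.intro_left _ rfl)
  have htK : t ∉ K := by
    intro h
    have := Subgroup.orderOf_dvd_natCard K h
    rw [ht, hcK] at this
    exact (Nat.not_even_iff_odd.2 (hodd.mul hodd)) (even_iff_two_dvd.2 this)
  refine aux_iso p hp H K hHK t ht htK hKn hcH hcG ?_ (hdis t htK)
  intro x hx y hy
  obtain ⟨h, hh, z, hz, e⟩ := hdec _ (hKn.conj_mem _ (hHK hy) t)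
  rw [e]
  have c1 : Commute x h := by
    have : IsCyclic H := isCyclic_of_prime_card hcH
    have := (IsCyclic.isMulCommutative (α := H)).is_comm.comm ⟨x, hx⟩ ⟨h, hh⟩
    exact congrArg Subtype.val this
  exact c1.mul_right (Subgroup.mem_center_iff.1 (hcen hz) x)
end

section
/- Let p be an odd prime, let (G, H, T) be a faithful RCC loop folder of order 2p with ⟨T⟩ = G, and let K be a subgroup of G with H ≤ K ≤ G, |G : K| = 2 and |K : H| = p. Set T₁ := T ∩ K, K₁ := ⟨T₁⟩ and H₁ := H ∩ K₁, and assume there exists s ∈ T with s ∉ K that does not commute with all elements of K₁. If H₁ ≠ 1, then H is a normal subgroup of K. -/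
theorem card_T1 {G : Type*} [Group G] [Finite G] (H K : Subgroup G) (T : Set G)
    (hLF : IsLoopFolder H T) (hT : ∀ k ∈ K, ∀ t ∈ T, k⁻¹ * t⁻¹ ∈ H → t ∈ K)
    (p : ℕ) (hKH : H.relIndex K = p) :
    Nat.card (T ∩ (K : Set G) : Set G) = p := by
  rw [← hKH]
  change _ = Nat.card (K ⧸ H.subgroupOf K)
  refine Nat.card_eq_of_bijective
    (fun t : (T ∩ (K : Set G) : Set G) =>
      (QuotientGroup.mk (⟨(t : G)⁻¹, K.inv_mem t.2.2⟩ : K) : K ⧸ H.subgroupOf K)) ⟨?_, ?_⟩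
  · intro t u h
    simp only [QuotientGroup.eq, Subgroup.mem_subgroupOf] at h
    have h' : (t : G) * (u : G)⁻¹ ∈ H := by simpa using h
    obtain ⟨w, -, hw⟩ := hLF.2 1 t
    have h1 := hw t ⟨t.2.1, by simp⟩
    have h2 := hw u ⟨u.2.1, by simpa using h'⟩
    exact Subtype.ext (h1.trans h2.symm)
  · intro q
    induction q using QuotientGroup.induction_on with
    | H k =>
      obtain ⟨t, ⟨ht, hm⟩, -⟩ := hLF.2 1 (k : G)⁻¹
      have hm' : (k : G)⁻¹ * t⁻¹ ∈ H := by simpa using hm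
      have htK : t ∈ K := hT k k.2 t ht hm'
      refine ⟨⟨t, ht, htK⟩, ?_⟩
      refine Eq.symm ?_
      rw [QuotientGroup.eq, Subgroup.mem_subgroupOf]
      simpa using hm'

theorem centralizer_index {G : Type*} [Group G] [Finite G] (p : ℕ) [Fact p.Prime] (S : Set G)
    (hinv : ∀ t ∈ S, ∀ g : G, g * t * g⁻¹ ∈ S) (h1 : (1 : G) ∈ S) (hc : Nat.card S = p) :
    ¬ p ∣ (Subgroup.centralizer S).index := by
  let A : MulAction G S :=
    { smul := fun g t => ⟨g * t * g⁻¹, hinv t t.2 g⟩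
      one_smul := fun t => Subtype.ext (by change 1 * (t : G) * 1⁻¹ = t; simp)
      mul_smul := fun g h t => Subtype.ext (by
        change g * h * (t : G) * (g * h)⁻¹ = g * (h * t * h⁻¹) * g⁻¹; group) }
  obtain ⟨P⟩ : Nonempty (Sylow p G) := inferInstance
  have hm := P.2.card_modEq_card_fixedPoints (α := S)
  have hpos : 0 < Nat.card (MulAction.fixedPoints P S) := by
    have : Nonempty (MulAction.fixedPoints P S) := by
      refine ⟨⟨⟨1, h1⟩, fun g => Subtype.ext ?_⟩⟩
      change (g : G) * 1 * (g : G)⁻¹ = 1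
      simp
    exact Nat.card_pos
  have hall : MulAction.fixedPoints P S = Set.univ := by
    have hd : p ∣ Nat.card (MulAction.fixedPoints P S) := by
      rw [hc] at hm
      exact (Nat.modEq_zero_iff_dvd.1 (hm.symm.trans (by simp [Nat.ModEq])))
    have hle := Nat.le_of_dvd hpos hd
    refine Set.eq_of_subset_of_ncard_le (Set.subset_univ _) ?_ (Set.toFinite _)
    have h2 := Set.ncard_le_ncard (Set.subset_univ (MulAction.fixedPoints P S)) (Set.toFinite _)
    rw [Set.ncard_univ] at h2 ⊢
    rw [Nat.card_coe_set_eq] at hle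
    omega
  have hle : (P : Subgroup G) ≤ Subgroup.centralizer S := by
    intro g hg
    rw [Subgroup.mem_centralizer_iff]
    intro t ht
    have h2 : (⟨t, ht⟩ : S) ∈ MulAction.fixedPoints P S := hall ▸ Set.mem_univ _
    have h3 : g * t * g⁻¹ = t := congrArg Subtype.val (h2 ⟨g, hg⟩)
    exact (mul_inv_eq_iff_eq_mul.1 h3).symm
  exact fun h => P.not_dvd_index (h.trans (Subgroup.index_dvd_of_le hle))

/-- Case 2, special case: if some `s ∈ T \\ K` does not centralize `K₁ := ⟨T ∩ K⟩` and
`H₁ = H ⊓ K₁ ≠ 1`, then `H` is normal in `K`. -/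
theorem stmt_17 {G : Type*} [Group G] [Finite G] (p : ℕ) (hp : p.Prime) (hodd : Odd p)
    (H K : Subgroup G) (T : Set G)
    (hLF : IsLoopFolder H T) (hRCC : IsRCC T) (hFaith : IsFaithfulFolder H)
    (hord : Nat.card T = 2 * p) (hgen : Subgroup.closure T = ⊤)
    (hHK : H ≤ K) (hGK : K.index = 2) (hKH : H.relIndex K = p)
    (s : G) (hs : s ∈ T) (hsK : s ∉ K)
    (hsnc : ¬ ∀ x ∈ Subgroup.closure (T ∩ (K : Set G)), s * x = x * s)
    (hH1 : H ⊓ Subgroup.closure (T ∩ (K : Set G)) ≠ ⊥) :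
    ∀ k ∈ K, ∀ x ∈ H, k⁻¹ * x * k ∈ H := by
  classical
  have : Fact p.Prime := ⟨hp⟩
  have hp3 : 3 ≤ p := by
    have := hp.two_le
    rcases hodd with ⟨m, hm⟩
    omega
  have hKn : K.Normal := Subgroup.normal_of_index_eq_two hGK
  have hT1c := card_T1 H K T hLF (fun k hk t _ h => by
    have := K.mul_mem hk (hHK h)
    simpa using this) p hKH
  have hconj : ∀ t ∈ T, ∀ g : G, g * t * g⁻¹ ∈ T := fun t ht g => by
    simpa using hRCC t ht g⁻¹
  have hT1inv : ∀ t ∈ T ∩ (K : Set G), ∀ g : G, g * t * g⁻¹ ∈ T ∩ (K : Set G) :=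
    fun t ht g => ⟨hconj t ht.1 g, hKn.conj_mem t ht.2 g⟩
  have hT2c : Nat.card (T \ (K : Set G) : Set G) = p := by
    have h1 := Set.ncard_inter_add_ncard_sdiff_eq_ncard T (K : Set G) (Set.toFinite _)
    rw [Nat.card_coe_set_eq] at *
    omega
  have hcop := centralizer_index p (T ∩ (K : Set G)) hT1inv ⟨hLF.1, K.one_mem⟩ hT1c
  obtain ⟨K1, hK1⟩ : ∃ K1, K1 = Subgroup.closure (T ∩ (K : Set G)) := ⟨_, rfl⟩
  rw [← hK1] at hH1
  clear hsnc
  have hTK1 : T ∩ (K : Set G) ⊆ K1 := hK1 ▸ Subgroup.subset_closure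
  have hK1K : K1 ≤ K := by
    rw [hK1, Subgroup.closure_le]; exact Set.inter_subset_right
  have hK1n : K1.Normal := by
    refine ⟨fun n hn g => ?_⟩
    have : K1 ≤ K1.comap (MulAut.conj g).toMonoidHom := by
      conv_lhs => rw [hK1]
      rw [Subgroup.closure_le]
      intro t ht
      exact hTK1 (hT1inv t ht g)
    exact this hn
  have hC : Subgroup.centralizer (T ∩ (K : Set G)) = Subgroup.centralizer (K1 : Set G) := by
    rw [hK1, Subgroup.centralizer_closure]
  rw [hC] at hcop
  -- H ⊓ K1 is normal in K
  have hHN : H ≤ Subgroup.normalizer ((H ⊓ K1 : Subgroup G) : Set G) := by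
    intro h hh
    rw [Subgroup.mem_normalizer_iff]
    intro x
    constructor
    · rintro ⟨h1, h2⟩
      exact ⟨H.mul_mem (H.mul_mem hh h1) (H.inv_mem hh), hK1n.conj_mem x h2 h⟩
    · rintro ⟨h1, h2⟩
      have h3 := H.mul_mem (H.mul_mem (H.inv_mem hh) h1) hh
      have h4 := hK1n.conj_mem _ h2 h⁻¹
      refine ⟨?_, ?_⟩
      · simpa [mul_assoc] using h3
      · simpa [mul_assoc] using h4
  have hCN : Subgroup.centralizer (K1 : Set G) ≤
      Subgroup.normalizer ((H ⊓ K1 : Subgroup G) : Set G) := by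
    refine le_trans (Subgroup.centralizer_le ?_) (Subgroup.centralizer_le_normalizer _)
    exact fun x hx => hx.2
  have hKN : K ≤ Subgroup.normalizer ((H ⊓ K1 : Subgroup G) : Set G) := by
    set N := Subgroup.normalizer ((H ⊓ K1 : Subgroup G) : Set G) with hN
    have h1 : N.index ∣ 2 * p := by
      have h2 : H.index = 2 * p := by
        rw [← Subgroup.relIndex_mul_index hHK, hKH, hGK, mul_comm]
      rw [← h2]; exact Subgroup.index_dvd_of_le hHN
    have h3 : ¬ p ∣ N.index := fun h => hcop (h.trans (Subgroup.index_dvd_of_le hCN))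
    have h4 : N.index ∣ 2 :=
      Nat.Coprime.dvd_of_dvd_mul_right ((hp.coprime_iff_not_dvd.2 h3).symm) h1
    have h5 : N.index ≤ 2 := Nat.le_of_dvd (by norm_num) h4
    have h6 : N.relIndex K ≤ N.index := by
      have := Subgroup.relIndex_le_of_le_right (H := N) (le_top : K ≤ ⊤)
        (by rw [Subgroup.relIndex_top_right]; exact Subgroup.index_ne_zero_of_finite)
      rwa [Subgroup.relIndex_top_right] at this
    have h7 : N.relIndex K ∣ p := by
      rw [← hKH]; exact Subgroup.relIndex_dvd_of_le_left K hHN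
    rcases (Nat.dvd_prime hp).1 h7 with h8 | h8
    · exact Subgroup.relIndex_eq_one.1 h8
    · omega
  have hH1K : ∀ k ∈ K, ∀ x ∈ H ⊓ K1, k * x * k⁻¹ ∈ H ⊓ K1 := fun k hk x hx =>
    ((Subgroup.mem_normalizer_iff.1 (hKN hk)) x).1 hx
  -- index of H in K1
  have hidx : H.relIndex K1 ∣ p := by
    have h1 := card_T1 H K1 T hLF (fun k hk t ht h => hTK1 ⟨ht, by
      have := K.mul_mem (hK1K hk) (hHK h)
      simpa using this⟩) _ rfl
    have h2 : T ∩ (K1 : Set G) = T ∩ (K : Set G) :=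
      Set.Subset.antisymm (fun x hx => ⟨hx.1, hK1K hx.2⟩) (fun x hx => ⟨hx.1, hTK1 hx⟩)
    rw [← h1, h2, hT1c]
  have hMn : (H.subgroupOf K1).Normal := by
    refine ⟨fun n hn g => ?_⟩
    rw [Subgroup.mem_subgroupOf] at hn ⊢
    exact (hH1K g (hK1K g.2) n ⟨hn, n.2⟩).1
  have hQ : Nat.card (K1 ⧸ H.subgroupOf K1) ∣ p := hidx
  have hcyc : ∀ a b : K1 ⧸ H.subgroupOf K1, a * b = b * a := by
    intro a b
    rcases (Nat.dvd_prime hp).1 hQ with h | h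
    · have := (Nat.card_eq_one_iff_unique.1 h).1
      exact Subsingleton.elim _ _
    · have := isCyclic_of_prime_card h
      letI := IsCyclic.commGroup (α := K1 ⧸ H.subgroupOf K1)
      exact mul_comm a b
  have hab : ∀ x ∈ K1, ∀ y ∈ K1, x * y = y * x := by
    intro x hx y hy
    have key : ∀ x ∈ K1, ∀ y ∈ K1, x * y * (x⁻¹ * y⁻¹) ∈ H := by
      intro x hx y hy
      have := hcyc (QuotientGroup.mk (⟨x⁻¹, K1.inv_mem hx⟩ : K1))
        (QuotientGroup.mk (⟨y⁻¹, K1.inv_mem hy⟩ : K1))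
      rw [← QuotientGroup.mk_mul, ← QuotientGroup.mk_mul, eq_comm, QuotientGroup.eq,
        Subgroup.mem_subgroupOf] at this
      simpa [mul_assoc] using this
    have h1 := hFaith (x * y * (x⁻¹ * y⁻¹)) (fun g => by
      have := key _ (hK1n.conj_mem x hx g) _ (hK1n.conj_mem y hy g)
      simpa [mul_assoc] using this)
    have h2 := mul_eq_one_iff_eq_inv.1 h1
    simpa using h2
  have hexp : ∀ x ∈ K1, x ^ p = 1 := by
    intro x hx
    have key : ∀ x ∈ K1, x ^ p ∈ H := by
      intro x hx
      have h1 : (QuotientGroup.mk (⟨x, hx⟩ : K1) : K1 ⧸ H.subgroupOf K1) ^ p = 1 := by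
        obtain ⟨c, hc⟩ := hQ
        conv_lhs => rw [hc]
        rw [pow_mul, pow_card_eq_one', one_pow]
      rw [← QuotientGroup.mk_pow, QuotientGroup.eq_one_iff, Subgroup.mem_subgroupOf] at h1
      simpa using h1
    refine hFaith _ (fun g => ?_)
    rw [← conj_pow]
    exact key _ (hK1n.conj_mem x hx g)
  -- trivial intersection
  have hsi : s⁻¹ ∉ K := fun h => hsK (by simpa using K.inv_mem h)
  have htriv : ∀ u ∈ H ⊓ K1, s⁻¹ * u * s ∈ H ⊓ K1 → u = 1 := by
    intro u hu hus
    refine hFaith u (fun g => ?_)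
    by_cases hg : g ∈ K
    · exact (hH1K g hg u hu).1
    · have h1 : g * s ∈ K := by
        rw [Subgroup.mul_mem_iff_of_index_two hGK]; tauto
      have := (hH1K _ h1 _ hus).1
      simpa [mul_assoc] using this
  -- T \ K is the orbit
  have hT2inv : ∀ t ∈ T \ (K : Set G), ∀ g : G, g * t * g⁻¹ ∈ T \ (K : Set G) := by
    intro t ht g
    refine ⟨hconj t ht.1 g, fun h => ht.2 ?_⟩
    have := hKn.conj_mem _ h g⁻¹
    simpa [mul_assoc] using this
  have horb : ∀ t ∈ T \ (K : Set G), ∃ h ∈ H ⊓ K1, t = h * s * h⁻¹ := by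
    let f : (H ⊓ K1 : Subgroup G) → (T \ (K : Set G) : Set G) :=
      fun h => ⟨h * s * (h : G)⁻¹, hT2inv s ⟨hs, hsK⟩ h⟩
    have hf : Function.Injective f := by
      intro a b hab'
      have e : (a : G) * s * (a : G)⁻¹ = b * s * (b : G)⁻¹ := congrArg Subtype.val hab'
      have h1 : s⁻¹ * ((b : G)⁻¹ * a) * s = (b : G)⁻¹ * a := by
        have h2 : (a : G) * s = b * s * (b : G)⁻¹ * a := by rw [← e]; group
        have h3 : (b : G)⁻¹ * (a * s) = s * ((b : G)⁻¹ * a) := by rw [h2]; group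
        rw [mul_assoc, mul_assoc, h3]; group
      have hm : (b : G)⁻¹ * a ∈ H ⊓ K1 := Subgroup.mul_mem _ (Subgroup.inv_mem _ b.2) a.2
      have h4 := htriv _ hm (by rw [h1]; exact hm)
      exact Subtype.ext (inv_mul_eq_one.1 h4).symm
    have hge : p ≤ Nat.card (H ⊓ K1 : Subgroup G) := by
      obtain ⟨⟨x, hx⟩, hx0⟩ := Subgroup.ne_bot_iff_exists_ne_one.1 hH1
      have hx1 : x ≠ 1 := fun h => hx0 (Subtype.ext h)
      have h1 : orderOf x = p := orderOf_eq_prime (hexp x hx.2) hx1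
      have h2 := Subgroup.orderOf_dvd_natCard _ hx
      rw [h1] at h2
      exact Nat.le_of_dvd Nat.card_pos h2
    have hle := Nat.card_le_card_of_injective f hf
    have hbij := (Nat.bijective_iff_injective_and_card f).2 ⟨hf, by omega⟩
    intro t ht
    obtain ⟨h, hh⟩ := hbij.2 ⟨t, ht⟩
    exact ⟨h, h.2, (congrArg Subtype.val hh).symm⟩
  have hs2K : s * s ∈ K := by
    rw [Subgroup.mul_mem_iff_of_index_two hGK]
  have hs2H : ∀ h ∈ H ⊓ K1, s * s * h = h * (s * s) := by
    intro h hh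
    obtain ⟨h', hh', e⟩ := horb _ (hT2inv _ (hT2inv s ⟨hs, hsK⟩ h) s)
    -- s h s h⁻¹ s⁻¹ = h' s h'⁻¹
    have hw : s * h * s⁻¹ ∈ K1 := hK1n.conj_mem h hh.2 s
    have hw' : s * h' * s⁻¹ ∈ K1 := hK1n.conj_mem h' hh'.2 s
    have hm1 : s * s * h * (s * s)⁻¹ ∈ H ⊓ K1 := hH1K _ hs2K _ hh
    have e1 : (s * h * s⁻¹) * (s * s * h * (s * s)⁻¹)⁻¹ = h' * (s * h' * s⁻¹)⁻¹ := by
      have : (s * h * s⁻¹) * (s * s * h * (s * s)⁻¹)⁻¹ = (s * (h * s * h⁻¹) * s⁻¹) * s⁻¹ := by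
        group
      rw [this, e]; group
    have e2 : (s * h * s⁻¹) * (s * h' * s⁻¹) = h' * (s * s * h * (s * s)⁻¹) := by
      have e3 : (s * h * s⁻¹) = h' * (s * h' * s⁻¹)⁻¹ * (s * s * h * (s * s)⁻¹) := by
        rw [← e1]; group
      rw [e3, mul_assoc, hab _ hm1.2 _ hw']; group
    have e4 : s⁻¹ * (h' * (s * s * h * (s * s)⁻¹)) * s = h * h' := by
      rw [← e2]; group
    have e5 := htriv (h' * (s * s * h * (s * s)⁻¹)) (Subgroup.mul_mem _ hh' hm1)
      (e4 ▸ Subgroup.mul_mem _ hh hh')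
    rw [e5] at e4
    have e6 : h' = h⁻¹ := by
      have : h * h' = 1 := by rw [← e4]; group
      exact (mul_eq_one_iff_inv_eq.1 this).symm
    rw [e6] at e5
    have e7 := inv_mul_eq_one.1 e5
    conv_rhs => rw [e7]
    group
  have hs2K1 : ∀ x ∈ K1, s * s * x = x * (s * s) := by
    intro x hx
    obtain ⟨h, hh, e⟩ := horb _ (hT2inv s ⟨hs, hsK⟩ x)
    have h1 : Commute (h⁻¹ * x) s := by
      have h2 : x * s = h * s * h⁻¹ * x := by rw [← e]; group
      change h⁻¹ * x * s = s * (h⁻¹ * x)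
      rw [mul_assoc, h2]; group
    have h3 : Commute (h⁻¹ * x) (s * s) := h1.mul_right h1
    have h4 : Commute h (s * s) := (hs2H h hh).symm
    have h5 := h4.mul_left h3
    rw [mul_inv_cancel_left] at h5
    exact h5.symm
  have htop : K1 ⊔ Subgroup.zpowers s = ⊤ := by
    rw [eq_top_iff, ← hgen, Subgroup.closure_le]
    intro t ht
    by_cases htK : t ∈ K
    · exact (le_sup_left : K1 ≤ K1 ⊔ Subgroup.zpowers s) (hTK1 ⟨ht, htK⟩)
    · obtain ⟨h, hh, e⟩ := horb t ⟨ht, htK⟩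
      have h1 : h ∈ K1 ⊔ Subgroup.zpowers s :=
        (le_sup_left : K1 ≤ K1 ⊔ Subgroup.zpowers s) hh.2
      have h2 : s ∈ K1 ⊔ Subgroup.zpowers s :=
        (le_sup_right : Subgroup.zpowers s ≤ K1 ⊔ Subgroup.zpowers s)
          (Subgroup.mem_zpowers s)
      rw [e]
      exact Subgroup.mul_mem _ (Subgroup.mul_mem _ h1 h2) (Subgroup.inv_mem _ h1)
  have hrep : ∀ g ∈ K, ∃ a ∈ K1, ∃ m : ℤ, g = a * (s * s) ^ m := by
    intro g hg
    have h1 : g ∈ K1 ⊔ Subgroup.zpowers s := htop ▸ Subgroup.mem_top g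
    rw [Subgroup.mem_sup_of_normal_left] at h1
    obtain ⟨a, ha, b, ⟨n, rfl⟩, rfl⟩ := h1
    have h2 : s ^ n ∈ K := by
      have := K.mul_mem (K.inv_mem (hK1K ha)) hg
      simpa using this
    rcases Int.even_or_odd' n with ⟨m, rfl | rfl⟩
    · exact ⟨a, ha, m, by
        change a * s ^ (2 * m) = _
        rw [zpow_mul, zpow_two]⟩
    · exfalso
      rw [zpow_add, zpow_mul, zpow_two, zpow_one] at h2
      have := K.mul_mem (K.inv_mem (K.zpow_mem hs2K m)) h2
      exact hsK (by simpa using this)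
  intro k hk x hx
  obtain ⟨a, ha, m, ea⟩ := hrep k hk
  obtain ⟨b, hb, n, eb⟩ := hrep x (hHK hx)
  have hcom : Commute k x := by
    have c1 : Commute a b := hab a ha b hb
    have c2 : Commute a (s * s) := (hs2K1 a ha).symm
    have c3 : Commute (s * s) b := hs2K1 b hb
    rw [ea, eb]
    exact (c1.mul_right (c2.zpow_right n)).mul_left
      ((c3.zpow_left m).mul_right (((Commute.refl (s * s)).zpow_left m).zpow_right n))
  have : k⁻¹ * x * k = x := by
    rw [mul_assoc, ← hcom.eq]; group
  rw [this]; exact hx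
end

section
/- Let q be an odd prime, let (G, H, T) be a faithful RCC loop folder of order 2q with ⟨T⟩ = G, and let K be a subgroup of G with H ≤ K ≤ G, |K : H| = 2 and |G : K| = q. If K is normal in G, then G is abelian and H = 1. -/
/-- The case `p = 2`: if `|K : H| = 2`, `|G : K| = q` and `K` is normal in `G`, then `G`
is abelian and `H = 1`. -/
theorem stmt_18 {G : Type*} [Group G] [Finite G] (q : ℕ) (hq : q.Prime) (hodd : Odd q)
    (H K : Subgroup G) (T : Set G)
    (hLF : IsLoopFolder H T) (hRCC : IsRCC T) (hFaith : IsFaithfulFolder H)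
    (hord : Nat.card T = 2 * q) (hgen : Subgroup.closure T = ⊤)
    (hHK : H ≤ K) (hKH : H.relIndex K = 2) (hGK : K.index = q)
    (hKnorm : K.Normal) :
    (∀ a b : G, a * b = b * a) ∧ H = ⊥ := by
  have hmul : ∀ a b : G, a ∈ K → b ∈ K → (a * b ∈ H ↔ (a ∈ H ↔ b ∈ H)) := by
    intro a b ha hb
    have h2 : (H.subgroupOf K).index = 2 := hKH
    have := Subgroup.mul_mem_iff_of_index_two h2 (a := ⟨a, ha⟩) (b := ⟨b, hb⟩)
    simpa [Subgroup.mem_subgroupOf] using this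
  have hsq1 : ∀ k ∈ K, k * k = 1 := by
    intro k hk
    apply hFaith
    intro g
    have hc := hKnorm.conj_mem k hk g
    have e : g * (k * k) * g⁻¹ = (g * k * g⁻¹) * (g * k * g⁻¹) := by group
    rw [e, hmul _ _ hc hc]
  have hKab : ∀ a ∈ K, ∀ b ∈ K, a * b = b * a := by
    intro a ha b hb
    have h1 := hsq1 _ (K.mul_mem ha hb)
    have ia : a⁻¹ = a := inv_eq_of_mul_eq_one_left (hsq1 a ha)
    have ib : b⁻¹ = b := inv_eq_of_mul_eq_one_left (hsq1 b hb)
    have := eq_inv_of_mul_eq_one_left h1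
    rw [mul_inv_rev, ia, ib] at this
    exact this
  have hcomm : ∀ a b : G, a * b * a⁻¹ * b⁻¹ ∈ K := by
    intro a b
    have : Fact q.Prime := ⟨hq⟩
    have hcard : Nat.card (G ⧸ K) = q := hGK
    have : IsCyclic (G ⧸ K) := isCyclic_of_prime_card hcard
    have hc : (a : G ⧸ K) * b = b * a := by
      obtain ⟨g, hg⟩ := IsCyclic.exists_generator (α := G ⧸ K)
      obtain ⟨m, hm⟩ := hg (a : G ⧸ K)
      obtain ⟨n, hn⟩ := hg (b : G ⧸ K)
      rw [← hm, ← hn]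
      exact zpow_mul_comm g m n
    rw [← QuotientGroup.eq_one_iff]
    rw [QuotientGroup.mk_mul, QuotientGroup.mk_mul, QuotientGroup.mk_mul, QuotientGroup.mk_inv, QuotientGroup.mk_inv]
    rw [hc]
    group
  have huniq : ∀ s ∈ T, ∀ t ∈ T, s * t⁻¹ ∈ H → s = t := by
    intro s hs t ht h
    refine (hLF.2 1 s).unique ⟨hs, ?_⟩ ⟨ht, ?_⟩
    · simp [H.one_mem]
    · simpa using h
  have hsqc : ∀ g : G, ∀ t ∈ T, g ^ 2 * t = t * g ^ 2 := by
    intro g t ht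
    have h1 := hRCC t ht g
    have h2 := hRCC _ h1 g
    have k1 : ∀ t : G, t * (g⁻¹ * t * g)⁻¹ ∈ K := by
      intro t
      have := hcomm t g⁻¹
      have e : t * (g⁻¹ * t * g)⁻¹ = t * g⁻¹ * t⁻¹ * g⁻¹⁻¹ := by group
      rw [e]; exact this
    have fix : ∀ t : G, t = g⁻¹ * t * g → g * t = t * g := by
      intro t h
      calc g * t = g * (g⁻¹ * t * g) := by rw [← h]
        _ = t * g := by group
    have key := hmul _ _ (k1 t) (k1 (g⁻¹ * t * g))
    have sq : g * t = t * g → g ^ 2 * t = t * g ^ 2 := by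
      intro h
      exact (Commute.pow_left (show Commute g t from h) 2)
    by_cases c1 : t * (g⁻¹ * t * g)⁻¹ ∈ H
    · exact sq (fix t (huniq _ ht _ h1 c1))
    by_cases c2 : (g⁻¹ * t * g) * (g⁻¹ * (g⁻¹ * t * g) * g)⁻¹ ∈ H
    · have := huniq _ h1 _ h2 c2
      apply sq; apply fix
      have h3 : g * (g⁻¹ * t * g) * g⁻¹ = g * (g⁻¹ * (g⁻¹ * t * g) * g) * g⁻¹ := by rw [← this]
      calc t = g * (g⁻¹ * t * g) * g⁻¹ := by group
        _ = _ := h3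
        _ = _ := by group
    · have h3 := key.2 (iff_of_false c1 c2)
      have h4 : t * (g⁻¹ * (g⁻¹ * t * g) * g)⁻¹ ∈ H := by
        convert h3 using 1; group
      have h5 := huniq _ ht _ h2 h4
      calc g ^ 2 * t = g ^ 2 * (g⁻¹ * (g⁻¹ * t * g) * g) := by rw [← h5]
        _ = t * g ^ 2 := by simp only [pow_two]; group
  have hsqz : ∀ g x : G, Commute (g ^ 2) x := by
    intro g x
    have hx : x ∈ Subgroup.closure T := by rw [hgen]; trivial
    have hle : Subgroup.closure T ≤ Subgroup.centralizer {g ^ 2} := by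
      rw [Subgroup.closure_le]
      intro t ht
      exact Subgroup.mem_centralizer_singleton_iff.2 (hsqc g t ht).symm
    exact (Subgroup.mem_centralizer_singleton_iff.1 (hle hx)).symm
  obtain ⟨m, hm⟩ := hodd
  have hpow : ∀ g : G, g ^ q ∈ K := by
    intro g
    rw [← hGK]
    exact K.pow_index_mem g
  have hred : ∀ g x : G, Commute (g ^ q) x → Commute g x := by
    intro g x h
    have e : g = g ^ q * ((g ^ 2) ^ m)⁻¹ := by
      rw [hm, pow_succ', pow_mul]; group
    rw [e]
    exact h.mul_left ((hsqz g x).pow_left m).inv_left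
  have hKz : ∀ k ∈ K, ∀ g : G, Commute g k := fun k hk g =>
    hred g k (hKab _ (hpow g) _ hk)
  have hab : ∀ a b : G, a * b = b * a := fun a b =>
    hred a b (hKz _ (hpow a) b).symm
  refine ⟨hab, ?_⟩
  rw [Subgroup.eq_bot_iff_forall]
  intro x hx
  apply hFaith
  intro g
  rw [hab g x]
  simpa using hx
end

section
/- Let q be an odd prime, let (G, H, T) be a faithful RCC loop folder of order 2q with ⟨T⟩ = G, and let K be a subgroup of G with H ≤ K ≤ G, |K : H| = 2 and |G : K| = q. If K is self-normalizing, i.e., N_G(K) = K, then there exists a normal subgroup M of G such that the subgroup HM has index 2 in G. -/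
theorem aux_trans {Ω : Type*} [Finite Ω] {q : ℕ} (hq : q.Prime) (hΩ : Nat.card Ω = q)
    (σ : Equiv.Perm Ω) (h : orderOf σ = q) (a b : Ω) : ∃ i : ℤ, (σ ^ i) a = b := by
  classical
  have := Fintype.ofFinite Ω
  rw [Nat.card_eq_fintype_card] at hΩ
  have hc : σ.IsCycle := Equiv.Perm.isCycle_of_prime_order'' (hΩ ▸ hq) (h.trans hΩ.symm)
  have hs : σ.support = Finset.univ := by
    rw [← Finset.card_eq_iff_eq_univ, ← hc.orderOf, h, hΩ]
  apply hc.exists_zpow_eq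
  · rw [← Equiv.Perm.mem_support, hs]; simp
  · rw [← Equiv.Perm.mem_support, hs]; simp

theorem aux_fix {Ω : Type*} [Finite Ω] {q : ℕ} (hq : q.Prime) (hΩ : Nat.card Ω = q)
    (σ τ : Equiv.Perm Ω) (h : orderOf σ = q) (hc : Commute σ τ) (a : Ω) (ha : τ a = a) :
    τ = 1 := by
  ext b
  obtain ⟨i, rfl⟩ := aux_trans hq hΩ σ h a b
  have := (hc.zpow_left i).eq
  have h2 := congrArg (fun f => f a) this
  simp only [Equiv.Perm.mul_apply, ha] at h2
  simp [← h2]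

theorem aux_pow {Ω : Type*} [Finite Ω] {q : ℕ} (hq : q.Prime) (hΩ : Nat.card Ω = q)
    (σ τ : Equiv.Perm Ω) (h : orderOf σ = q) (hc : Commute σ τ) :
    τ ∈ Subgroup.zpowers σ := by
  have : Nonempty Ω := (Nat.card_pos_iff.1 (hΩ ▸ hq.pos)).1
  obtain ⟨a⟩ := this
  obtain ⟨i, hi⟩ := aux_trans hq hΩ σ h a (τ a)
  refine ⟨i, ?_⟩
  have h1 : Commute σ (σ ^ (-i) * τ) := ((Commute.refl σ).zpow_right _).mul_right hc
  have h2 := aux_fix hq hΩ σ _ h h1 a (by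
    rw [Equiv.Perm.mul_apply, ← hi, ← Equiv.Perm.mul_apply, ← zpow_add]; simp)
  rw [zpow_neg, inv_mul_eq_one] at h2
  exact h2

/-- A fixed point free element normalizing a regular group of prime order lies in it. -/
theorem aux_fpf {Ω : Type*} [Finite Ω] {q : ℕ} (hq : q.Prime) (hΩ : Nat.card Ω = q)
    (σ y : Equiv.Perm Ω) (h : orderOf σ = q)
    (hn : ∀ p ∈ Subgroup.zpowers σ, y * p * y⁻¹ ∈ Subgroup.zpowers σ)
    (hy : ∀ a, y a ≠ a) : y ∈ Subgroup.zpowers σ := by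
  by_contra hcon
  have : Nonempty Ω := (Nat.card_pos_iff.1 (hΩ ▸ hq.pos)).1
  obtain ⟨a⟩ := this
  let P := Subgroup.zpowers σ
  have hcomm : ∀ p ∈ P, Commute p y → p = 1 := by
    intro p hp hpy
    by_contra hp1
    have ho : orderOf p = q := by
      have h1 : orderOf p ∣ q := by
        obtain ⟨i, rfl⟩ := hp
        rw [← h]
        exact orderOf_dvd_of_mem_zpowers ⟨i, rfl⟩
      rcases (Nat.dvd_prime hq).1 h1 with h2 | h2
      · exact absurd (orderOf_eq_one_iff.1 h2) hp1
      · exact h2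
    have h3 := aux_pow hq hΩ p y ho hpy
    exact hcon ((Subgroup.zpowers_le.2 hp) h3)
  let f : P → P := fun p => ⟨p * (y * p⁻¹ * y⁻¹), P.mul_mem p.2 (hn _ (P.inv_mem p.2))⟩
  have hf : Function.Injective f := by
    intro p1 p2 h12
    have h1 : (p1 : Equiv.Perm Ω) * (y * (p1 : Equiv.Perm Ω)⁻¹ * y⁻¹) = p2 * (y * (p2 : Equiv.Perm Ω)⁻¹ * y⁻¹) :=
      congrArg Subtype.val h12
    have h2 : (p1 : Equiv.Perm Ω) * y * (p1 : Equiv.Perm Ω)⁻¹ = p2 * y * (p2 : Equiv.Perm Ω)⁻¹ := by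
      have := congrArg (· * y) h1
      simpa [mul_assoc] using this
    have h3 := hcomm ((p2 : Equiv.Perm Ω)⁻¹ * p1) (P.mul_mem (P.inv_mem p2.2) p1.2) (by
      have h4 : (p1 : Equiv.Perm Ω) * y = p2 * y * (p2 : Equiv.Perm Ω)⁻¹ * p1 := by
        rw [← h2]; group
      change (p2 : Equiv.Perm Ω)⁻¹ * p1 * y = y * ((p2 : Equiv.Perm Ω)⁻¹ * p1)
      rw [mul_assoc, h4]; group)
    rw [inv_mul_eq_one] at h3
    exact Subtype.ext h3.symm
  have hs := Finite.surjective_of_injective hf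
  obtain ⟨i, hi⟩ := aux_trans hq hΩ σ h a (y a)
  obtain ⟨p, hp⟩ := hs ⟨(σ ^ i)⁻¹, P.inv_mem ⟨i, rfl⟩⟩
  have hp' : (p : Equiv.Perm Ω) * (y * (p : Equiv.Perm Ω)⁻¹ * y⁻¹) = (σ ^ i)⁻¹ :=
    congrArg Subtype.val hp
  have h5 : (p : Equiv.Perm Ω) * y * (p : Equiv.Perm Ω)⁻¹ = (σ ^ i)⁻¹ * y := by
    rw [← hp']; group
  have h6 : ((σ ^ i)⁻¹ * y) a = a := by
    rw [Equiv.Perm.mul_apply, ← hi]; simp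
  rw [← h5] at h6
  apply hy ((p : Equiv.Perm Ω)⁻¹ a)
  simp only [Equiv.Perm.mul_apply] at h6
  exact (Equiv.Perm.inv_eq_iff_eq.2 h6.symm).symm

/-- Sylow argument. -/
theorem aux_sylow {Γ : Type*} [Group Γ] [Finite Γ] {q m c : ℕ} (hq : q.Prime) (hodd : Odd q)
    (hcard : Nat.card Γ = q * m) (hmc : m ∣ c) (hqc : ¬ q ∣ c)
    (hc : c ≤ q - 1 ∨ c = 2 * q - 2) (hfac : Nat.card Γ ∣ q.factorial)
    (P : Subgroup Γ) (hP : Nat.card P = q) : P.Normal := by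
  have := Fact.mk hq
  have hqm : ¬ q ∣ m := fun h => hqc (h.trans hmc)
  have hm0 : m ≠ 0 := by rintro rfl; simp at hqm
  have hc0 : c ≠ 0 := by rintro rfl; simp at hqc
  let S : Sylow q Γ := Sylow.ofCard P (by
    rw [hP, hcard, Nat.factorization_mul hq.ne_zero hm0]
    simp [hq.factorization_self, Nat.factorization_eq_zero_of_not_dvd hqm])
  have hidx : P.index = m := by
    have := P.card_mul_index
    rw [hP, hcard] at this
    exact Nat.eq_of_mul_eq_mul_left hq.pos this
  have h1 : Nat.card (Sylow q Γ) ∣ m := by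
    have := S.card_dvd_index
    rw [← hidx]; exact this
  have h2 := card_sylow_modEq_one q Γ
  generalize hn : Nat.card (Sylow q Γ) = n at h1 h2
  have hn0 : 0 < n := Nat.pos_of_dvd_of_pos h1 (Nat.pos_of_ne_zero hm0)
  by_cases hn1 : n = 1
  · have : Subsingleton (Sylow q Γ) := (Nat.card_eq_one_iff_unique.1 (hn.trans hn1)).1
    exact S.normal_of_subsingleton
  · exfalso
    have h3 : q ∣ n - 1 := (Nat.modEq_iff_dvd' (by omega)).1 h2.symm
    obtain ⟨k, hk⟩ := h3
    have h2q := hq.two_le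
    have hk0 : k ≠ 0 := by rintro rfl; omega
    have hnc : n ∣ c := h1.trans hmc
    have hnle := Nat.le_of_dvd (Nat.pos_of_ne_zero hc0) hnc
    have hqk : q * 1 ≤ q * k := Nat.mul_le_mul_left _ (by omega)
    rcases hc with hc | hc
    · omega
    · have hk1 : k = 1 := by
        by_contra hk1
        have : q * 2 ≤ q * k := Nat.mul_le_mul_left _ (by omega)
        omega
      have hnq : n = q + 1 := by subst hk1; omega
      obtain ⟨j, hj⟩ := hnc
      have hj1 : j = 1 := by
        by_contra hj1
        have hj0 : j ≠ 0 := by rintro rfl; omega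
        have : n * 2 ≤ n * j := Nat.mul_le_mul_left _ (by omega)
        omega
      subst hj1
      have hq3 : q = 3 := by omega
      have hn4 : n = 4 := by omega
      have hc4 : c = 4 := by omega
      have hm4 : m = 4 := Nat.dvd_antisymm (hc4 ▸ hmc) (hn4 ▸ h1)
      rw [hcard, hq3, hm4] at hfac
      exact absurd hfac (by decide)

theorem aux_class {G : Type*} [Group G] (t : G) :
    (Subgroup.centralizer {t}).index = (MulAction.orbit (ConjAct G) t).ncard := by
  rw [← MulAction.index_stabilizer, ConjAct.stabilizer_eq_centralizer]
  rfl

theorem aux_main {G : Type*} [Group G] [Finite G] {q : ℕ} (hq : q.Prime) (hodd : Odd q)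
    (K : Subgroup G) (hGK : K.index = q)
    (hexp : ∀ c ∈ K.normalCore, c * c = 1) (t : G) (htK : t ∉ K)
    (hqc : ¬ q ∣ (Subgroup.centralizer {t}).index)
    (hc : (Subgroup.centralizer {t}).index ≤ q - 1 ∨
      (Subgroup.centralizer {t}).index = 2 * q - 2) :
    orderOf (MulAction.toPermHom G (G ⧸ K) t) = q ∧
    ∀ g : G, MulAction.toPermHom G (G ⧸ K) (g * t * g⁻¹) ∈
      Subgroup.zpowers (MulAction.toPermHom G (G ⧸ K) t) := by
  have := Fact.mk hq
  set φ := MulAction.toPermHom G (G ⧸ K) with hφ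
  have hker : K.normalCore = φ.ker := K.normalCore_eq_ker
  have hΩ : Nat.card (G ⧸ K) = q := hGK
  set Z := Subgroup.centralizer {t} with hZ
  have hfixK : ∀ k ∈ K, φ k ((1 : G) : G ⧸ K) = ((1 : G) : G ⧸ K) := by
    intro k hk
    change ((k * 1 : G) : G ⧸ K) = _
    rw [QuotientGroup.eq]
    simpa using hk
  -- an element of order q in Z
  have hqZ : q ∣ Nat.card Z := by
    have h1 : q ∣ Nat.card Z * Z.index := by
      rw [Z.card_mul_index, ← hGK]; exact K.index_dvd_card
    exact (hq.dvd_mul.1 h1).resolve_right hqc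
  obtain ⟨⟨x, hxZ⟩, hx⟩ := exists_prime_orderOf_dvd_card' q hqZ
  rw [Subgroup.orderOf_mk] at hx
  have hφx : orderOf (φ x) = q := by
    have h1 : orderOf (φ x) ∣ q := hx ▸ orderOf_map_dvd φ x
    rcases (Nat.dvd_prime hq).1 h1 with h2 | h2
    · exfalso
      have h3 : x ∈ K.normalCore := by rw [hker]; exact orderOf_eq_one_iff.1 h2
      have h4 := hexp x h3
      have h5 : orderOf x ∣ 2 := orderOf_dvd_of_pow_eq_one (by rw [pow_two, h4])
      rw [hx] at h5
      have := (Nat.prime_dvd_prime_iff_eq hq Nat.prime_two).1 h5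
      subst this
      exact absurd hodd (by decide)
    · exact h2
  have hcx : Commute (φ x) (φ t) :=
    Commute.map (Subgroup.mem_centralizer_singleton_iff.1 hxZ) φ
  have hφt1 : φ t ≠ 1 := by
    intro h
    have : t ∈ K.normalCore := by rw [hker]; exact h
    exact htK (K.normalCore_le this)
  have hφt : orderOf (φ t) = q := by
    have h1 : orderOf (φ t) ∣ q := by
      rw [← hφx]; exact orderOf_dvd_of_mem_zpowers (aux_pow hq hΩ _ _ hφx hcx)
    rcases (Nat.dvd_prime hq).1 h1 with h2 | h2
    · exact absurd (orderOf_eq_one_iff.1 h2) hφt1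
    · exact h2
  refine ⟨hφt, ?_⟩
  have hZK : Z ⊓ K ≤ K.normalCore := by
    rintro h ⟨hhZ, hhK⟩
    rw [hker]
    have h1 : Commute (φ t) (φ h) :=
      (Commute.map (Subgroup.mem_centralizer_singleton_iff.1 hhZ) φ).symm
    exact aux_fix hq hΩ _ _ hφt h1 _ (hfixK h hhK)
  have hrel : Z.relIndex K = Z.index := by
    have e1 : Z.relIndex K * q = K.relIndex Z * Z.index := by
      rw [← hGK, ← Subgroup.inf_relIndex_right, Subgroup.relIndex_mul_index inf_le_right,
        ← Subgroup.inf_relIndex_right K Z, Subgroup.relIndex_mul_index inf_le_right, inf_comm]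
    have e2 : q ∣ K.relIndex Z :=
      (hq.dvd_mul.1 (Dvd.intro_left _ e1)).resolve_right hqc
    have e3 : K.relIndex Z = q := by
      apply le_antisymm
      · rw [← hGK]; rw [← Subgroup.relIndex_top_right]; exact Subgroup.relIndex_le_of_le_right le_top Subgroup.index_ne_zero_of_finite
      · exact Nat.le_of_dvd (Nat.pos_of_ne_zero Subgroup.index_ne_zero_of_finite) e2
    rw [e3, mul_comm] at e1
    exact Nat.eq_of_mul_eq_mul_left hq.pos e1
  have hmc : K.normalCore.relIndex K ∣ Z.index := by
    rw [← hrel, ← Subgroup.inf_relIndex_right Z]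
    exact Subgroup.relIndex_dvd_of_le_left K hZK
  have hcard : Nat.card φ.range = q * K.normalCore.relIndex K := by
    rw [← Subgroup.index_ker, ← hker, ← Subgroup.relIndex_mul_index K.normalCore_le, hGK, mul_comm]
  have hfac : Nat.card φ.range ∣ q.factorial := by
    rw [← hΩ, ← Nat.card_perm]; exact Subgroup.card_subgroup_dvd_card _
  have hN := aux_sylow hq hodd hcard hmc hqc hc hfac
    (Subgroup.zpowers (⟨φ t, MonoidHom.mem_range.2 ⟨t, rfl⟩⟩ : φ.range))
    (by rw [Nat.card_zpowers, Subgroup.orderOf_mk, hφt])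
  intro g
  obtain ⟨i, hi⟩ := hN.conj_mem _ (Subgroup.mem_zpowers _) (⟨φ g, MonoidHom.mem_range.2 ⟨g, rfl⟩⟩ : φ.range)
  refine ⟨i, ?_⟩
  have := congrArg Subtype.val hi
  simpa using this

/-- The case `p = 2`: if `|K : H| = 2`, `|G : K| = q` and `N_G(K) = K`, then there is a
normal subgroup `M` of `G` with `|G : HM| = 2`. -/
theorem stmt_19 {G : Type*} [Group G] [Finite G] (q : ℕ) (hq : q.Prime) (hodd : Odd q)
    (H K : Subgroup G) (T : Set G)
    (hLF : IsLoopFolder H T) (hRCC : IsRCC T) (hFaith : IsFaithfulFolder H)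
    (hord : Nat.card T = 2 * q) (hgen : Subgroup.closure T = ⊤)
    (hHK : H ≤ K) (hKH : H.relIndex K = 2) (hGK : K.index = q)
    (hself : Subgroup.normalizer (K : Set G) = K) :
    ∃ M : Subgroup G, M.Normal ∧ (H ⊔ M).index = 2 := by
  have := Fact.mk hq
  have h2q := hq.two_le
  have hq3 : 3 ≤ q := by
    rcases Nat.lt_or_ge q 3 with h | h
    · have : q = 2 := by omega
      subst this
      exact absurd hodd (by decide)
    · exact h
  obtain ⟨h1T, hT⟩ := hLF
  have hφker : K.normalCore = (MulAction.toPermHom G (G ⧸ K)).ker := K.normalCore_eq_ker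
  set φ := MulAction.toPermHom G (G ⧸ K) with hφ
  have hΩ : Nat.card (G ⧸ K) = q := hGK
  -- parity facts
  have hpar : ∀ a ∈ K, ∀ b ∈ K, (a * b ∈ H ↔ (a ∈ H ↔ b ∈ H)) := by
    intro a ha b hb
    have := Subgroup.mul_mem_iff_of_index_two (H := H.subgroupOf K) hKH (a := ⟨a, ha⟩) (b := ⟨b, hb⟩)
    simpa [Subgroup.mem_subgroupOf] using this
  have hexp : ∀ c ∈ K.normalCore, c * c = 1 := by
    intro c hc
    apply hFaith
    intro g
    have h1 : g * c * g⁻¹ ∈ K := hc g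
    have h2 := (hpar _ h1 _ h1).2 Iff.rfl
    convert h2 using 1
    group
  -- the element z
  have hU : ∀ s ∈ T, ∀ t ∈ T, s * t⁻¹ ∈ H → s = t := by
    intro s hs t ht hst
    refine (hT 1 s).unique ⟨hs, ?_⟩ ⟨ht, ?_⟩
    · simp [H.one_mem]
    · simpa using hst
  have hex : ∃ k ∈ K, k ∉ H := by
    by_contra hcon
    push Not at hcon
    have : H.relIndex K = 1 := Subgroup.relIndex_eq_one.2 hcon
    omega
  obtain ⟨k, hkK, hkH⟩ := hex
  obtain ⟨z, ⟨hzT, hkz⟩, -⟩ := hT 1 k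
  simp only [one_mul, inv_one, mul_one] at hkz
  have hzK : z ∈ K := by
    have := K.mul_mem (K.inv_mem (hHK hkz)) hkK
    simpa using this
  have hzH : z ∉ H := by
    intro h
    exact hkH (by simpa using H.mul_mem hkz h)
  have hTK : ∀ t ∈ T, t ∈ K → t = 1 ∨ t = z := by
    intro t ht htK
    by_cases htH : t ∈ H
    · left
      exact hU t ht 1 h1T (by simpa using htH)
    · right
      refine hU t ht z hzT ((hpar t htK _ (K.inv_mem hzK)).2 ?_)
      simp [htH, hzH]
  have hz1 : z ≠ 1 := fun h => hzH (h ▸ H.one_mem)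
  have hTconj : ∀ t ∈ T, ∀ g : G, g * t * g⁻¹ ∈ T := by
    intro t ht g
    simpa using hRCC t ht g⁻¹
  have hzconj : ∀ g : G, g * z * g⁻¹ ∈ K → g * z * g⁻¹ = z := by
    intro g hg
    rcases hTK _ (hTconj z hzT g) hg with h | h
    · exfalso; apply hz1
      simpa using h
    · exact h
  have hzcK : ∀ k ∈ K, k * z = z * k := by
    intro k hk
    have := hzconj k (K.mul_mem (K.mul_mem hk hzK) (K.inv_mem hk))
    rw [mul_inv_eq_iff_eq_mul] at this
    exact this
  -- orbits
  have horb : ∀ t s : G, s ∈ MulAction.orbit (ConjAct G) t ↔ ∃ g : G, g * t * g⁻¹ = s := by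
    intro t s
    constructor
    · rintro ⟨g, rfl⟩
      exact ⟨ConjAct.ofConjAct g, (ConjAct.smul_def g t).symm⟩
    · rintro ⟨g, rfl⟩
      exact ⟨ConjAct.toConjAct g, ConjAct.smul_def _ t⟩
  have hTn : T.ncard = 2 * q := hord
  have hfix : ∀ y g : G, φ y ((g : G) : G ⧸ K) = ((g : G) : G ⧸ K) → g⁻¹ * y * g ∈ K := by
    intro y g h
    change ((y * g : G) : G ⧸ K) = _ at h
    have := QuotientGroup.eq.1 h.symm
    simpa [mul_assoc] using this
  by_cases hzc : ∀ g : G, g * z * g⁻¹ = z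
  · -- case 1: contradiction
    exfalso
    let T' : Set G := T \ {1, z}
    have hT'n : T'.ncard = 2 * q - 2 := by
      rw [Set.ncard_diff (by rintro a (rfl | rfl) <;> assumption), hTn, Set.ncard_pair hz1.symm]
    have hT'conj : ∀ t ∈ T', ∀ g : G, g * t * g⁻¹ ∈ T' := by
      rintro t ⟨ht, htn⟩ g
      refine ⟨hTconj t ht g, ?_⟩
      rintro (h | h)
      · apply htn; left; simpa using h
      · apply htn; right
        have : t = g⁻¹ * z * g := by rw [← (show g * t * g⁻¹ = z from h)]; group
        have h2 := hzc g⁻¹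
        rw [inv_inv] at h2
        exact this.trans h2
    have hT'orb : ∀ t ∈ T', MulAction.orbit (ConjAct G) t ⊆ T' := by
      intro t ht s hs
      obtain ⟨g, rfl⟩ := (horb t s).1 hs
      exact hT'conj t ht g
    have hT'K : ∀ t ∈ T', t ∉ K := fun t ht htK => ht.2 (hTK t ht.1 htK)
    have hpos : ∀ t : G, 0 < (MulAction.orbit (ConjAct G) t).ncard := fun t =>
      (Set.ncard_pos (Set.toFinite _)).2 ⟨t, MulAction.mem_orbit_self t⟩
    have hsel : ∃ t ∈ T', (MulAction.orbit (ConjAct G) t).ncard ≤ q - 1 ∨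
        (MulAction.orbit (ConjAct G) t).ncard = 2 * q - 2 := by
      obtain ⟨t0, ht0⟩ : T'.Nonempty := (Set.ncard_pos (Set.toFinite _)).1 (by omega)
      by_cases hall : T' ⊆ MulAction.orbit (ConjAct G) t0
      · exact ⟨t0, ht0, Or.inr (by rw [(hT'orb t0 ht0).antisymm hall, hT'n])⟩
      · obtain ⟨t1, ht1, hn1⟩ := Set.not_subset.1 hall
        have hd : Disjoint (MulAction.orbit (ConjAct G) t0) (MulAction.orbit (ConjAct G) t1) := by
          rw [Set.disjoint_left]
          intro s hs0 hs1
          apply hn1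
          rw [← MulAction.orbit_eq_iff.2 hs0, MulAction.orbit_eq_iff.2 hs1]
          exact MulAction.mem_orbit_self t1
        have hle : (MulAction.orbit (ConjAct G) t0 ∪ MulAction.orbit (ConjAct G) t1).ncard ≤
            T'.ncard := Set.ncard_le_ncard (Set.union_subset (hT'orb t0 ht0) (hT'orb t1 ht1))
        rw [Set.ncard_union_eq hd, hT'n] at hle
        by_cases hle0 : (MulAction.orbit (ConjAct G) t0).ncard ≤ q - 1
        · exact ⟨t0, ht0, Or.inl hle0⟩
        · exact ⟨t1, ht1, Or.inl (by omega)⟩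
    obtain ⟨t, ht, hc⟩ := hsel
    have hqc : ¬ q ∣ (MulAction.orbit (ConjAct G) t).ncard := by
      intro hd
      rcases hc with hc | hc
      · have := Nat.le_of_dvd (hpos t) hd
        omega
      · rw [hc] at hd
        obtain ⟨j, hj⟩ := hd
        have hj1 : j < 2 := by
          by_contra hj1
          have : q * 2 ≤ q * j := Nat.mul_le_mul_left _ (by omega)
          omega
        interval_cases j <;> omega
    rw [← aux_class] at hc hqc
    obtain ⟨hφt, hnorm⟩ := aux_main hq hodd K hGK hexp t (hT'K t ht) hqc hc
    rw [← hφ] at hφt hnorm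
    have hTP : ∀ s ∈ T, φ s ∈ Subgroup.zpowers (φ t) := by
      intro s hs
      by_cases hs' : s ∈ T'
      · apply aux_fpf hq hΩ _ _ hφt
        · rintro p ⟨i, rfl⟩
          have h1 := Subgroup.zpow_mem _ (hnorm s) i
          rw [map_mul, map_mul, map_inv, conj_zpow] at h1
          exact h1
        · intro a
          induction a using QuotientGroup.induction_on with
          | H g =>
            intro h
            have h1 := hfix s g h
            have h2 := hT'conj s hs' g⁻¹
            rw [inv_inv] at h2
            exact hT'K _ h2 h1
      · have h1 : s = 1 ∨ s = z := by
          by_contra hcon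
          exact hs' ⟨hs, hcon⟩
        have h2 : φ s = 1 := by
          rw [← MonoidHom.mem_ker, ← hφker]
          rcases h1 with rfl | rfl
          · exact Subgroup.one_mem _
          · intro g
            rw [hzc g]; exact hzK
        rw [h2]; exact Subgroup.one_mem _
    have hall : ∀ g : G, φ g ∈ Subgroup.zpowers (φ t) := by
      have : Subgroup.closure T ≤ (Subgroup.zpowers (φ t)).comap φ :=
        (Subgroup.closure_le _).2 hTP
      rw [hgen] at this
      intro g
      exact this (Subgroup.mem_top g)
    have hKC : K ≤ K.normalCore := by
      intro h hh
      rw [hφker]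
      have h1 : Commute (φ t) (φ h) := by
        obtain ⟨i, hi⟩ := hall h
        rw [← hi]
        exact (Commute.refl _).zpow_right i
      refine aux_fix hq hΩ _ _ hφt h1 ((1 : G) : G ⧸ K) ?_
      change ((h * 1 : G) : G ⧸ K) = _
      rw [QuotientGroup.eq]
      simpa using hh
    have hKn : K.Normal := by
      have : K = K.normalCore := le_antisymm hKC K.normalCore_le
      rw [this]; infer_instance
    have : Subgroup.normalizer (K : Set G) = ⊤ := Subgroup.normalizer_eq_top_iff.2 hKn
    rw [hself] at this
    rw [this, Subgroup.index_top] at hGK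
    omega
  · -- case 2
    have hzZ : (Subgroup.centralizer {z}).index = q := by
      have h1 : K ≤ Subgroup.centralizer {z} := fun k hk =>
        Subgroup.mem_centralizer_singleton_iff.2 (hzcK k hk)
      have h2 := Subgroup.index_dvd_of_le h1
      rw [hGK] at h2
      rcases (Nat.dvd_prime hq).1 h2 with h3 | h3
      · exfalso; apply hzc
        intro g
        have h4 : g ∈ Subgroup.centralizer {z} := by
          rw [Subgroup.index_eq_one.1 h3]; exact Subgroup.mem_top g
        rw [Subgroup.mem_centralizer_singleton_iff] at h4
        rw [h4]; group
      · exact h3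
    have hzC : z ∉ K.normalCore := fun h => hzc fun g => hzconj g (h g)
    rw [aux_class] at hzZ
    let T' : Set G := (T \ {1}) \ MulAction.orbit (ConjAct G) z
    have hsub : MulAction.orbit (ConjAct G) z ⊆ T \ {1} := by
      intro s hs
      obtain ⟨g, rfl⟩ := (horb z s).1 hs
      refine ⟨hTconj z hzT g, ?_⟩
      intro h
      apply hz1
      simpa using h
    have hT'n : T'.ncard = q - 1 := by
      rw [Set.ncard_diff hsub, Set.ncard_diff (by simpa using h1T), hTn, hzZ, Set.ncard_singleton]
      omega
    obtain ⟨t, ht⟩ : T'.Nonempty := (Set.ncard_pos (Set.toFinite _)).1 (by omega)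
    have htorb : MulAction.orbit (ConjAct G) t ⊆ T' := by
      intro s hs
      obtain ⟨g, hg⟩ := (horb t s).1 hs
      refine ⟨⟨hg ▸ hTconj t ht.1.1 g, ?_⟩, ?_⟩
      · intro h
        apply ht.1.2
        have h' : s = 1 := h
        rw [h'] at hg
        simpa using hg
      · intro h
        apply ht.2
        rw [← MulAction.orbit_eq_iff.2 h, MulAction.orbit_eq_iff.2 hs]
        exact MulAction.mem_orbit_self t
    have hle := Set.ncard_le_ncard htorb
    have hpos : 0 < (MulAction.orbit (ConjAct G) t).ncard :=
      (Set.ncard_pos (Set.toFinite _)).2 ⟨t, MulAction.mem_orbit_self t⟩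
    rw [hT'n] at hle
    have hqc : ¬ q ∣ (MulAction.orbit (ConjAct G) t).ncard := by
      intro hd
      have := Nat.le_of_dvd hpos hd
      omega
    rw [← aux_class] at hle hqc
    have htK : t ∉ K := by
      intro h
      rcases hTK t ht.1.1 h with h | h
      · exact ht.1.2 h
      · exact ht.2 (h ▸ MulAction.mem_orbit_self _)
    obtain ⟨hφt, hnorm⟩ := aux_main hq hodd K hGK hexp t htK hqc (Or.inl hle)
    rw [← hφ] at hφt hnorm
    -- the commutator
    let u : G := z * (t * z⁻¹ * t⁻¹)
    have huP : φ u ∈ Subgroup.zpowers (φ t) := by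
      have : u = (z * t * z⁻¹) * t⁻¹ := by simp only [u]; group
      rw [this, map_mul, map_inv]
      exact Subgroup.mul_mem _ (hnorm z) (Subgroup.inv_mem _ (Subgroup.mem_zpowers _))
    have hu1 : φ u ≠ 1 := by
      intro h
      have h0 : u = (z * t) * (t * z)⁻¹ := by simp only [u]; group
      rw [h0, map_mul, map_inv, mul_inv_eq_one, map_mul, map_mul] at h
      have h1 : Commute (φ t) (φ z) := h.symm
      apply hzC
      rw [hφker]
      refine aux_fix hq hΩ _ _ hφt h1 ((1 : G) : G ⧸ K) ?_
      change ((z * 1 : G) : G ⧸ K) = _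
      rw [QuotientGroup.eq]
      simpa using hzK
    have hφu : orderOf (φ u) = q := by
      have h1 : orderOf (φ u) ∣ q := hφt ▸ orderOf_dvd_of_mem_zpowers huP
      rcases (Nat.dvd_prime hq).1 h1 with h2 | h2
      · exact absurd (orderOf_eq_one_iff.1 h2) hu1
      · exact h2
    have hzcC : ∀ c ∈ K.normalCore, Commute c z := fun c hc => hzcK c (K.normalCore_le hc)
    have hucC : ∀ c ∈ K.normalCore, Commute c u := by
      intro c hc
      refine (hzcC c hc).mul_right ?_
      have h1 : t⁻¹ * c * t ∈ K.normalCore := by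
        have := K.normalCore_normal.conj_mem c hc t⁻¹
        simpa using this
      have h2 : (t⁻¹ * c * t) * z⁻¹ = z⁻¹ * (t⁻¹ * c * t) := ((hzcC _ h1).inv_right).eq
      change c * (t * z⁻¹ * t⁻¹) = (t * z⁻¹ * t⁻¹) * c
      calc c * (t * z⁻¹ * t⁻¹) = t * ((t⁻¹ * c * t) * z⁻¹) * t⁻¹ := by group
        _ = t * (z⁻¹ * (t⁻¹ * c * t)) * t⁻¹ := by rw [h2]
        _ = _ := by group
    -- P = zpowers (φ u)
    have hPu : ∀ g : G, ∃ i : ℤ, φ (g * u * g⁻¹) = φ u ^ i := by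
      intro g
      have h1 : φ (g * u * g⁻¹) ∈ Subgroup.zpowers (φ t) := by
        obtain ⟨j, hj⟩ := huP
        have h2 := Subgroup.zpow_mem _ (hnorm g) j
        rw [map_mul, map_mul, map_inv, conj_zpow] at h2
        rw [map_mul, map_mul, map_inv, ← hj]
        exact h2
      have hc : Commute (φ u) (φ (g * u * g⁻¹)) := by
        obtain ⟨j, hj⟩ := huP
        obtain ⟨l, hl⟩ := h1
        rw [← hj, ← hl]
        exact ((Commute.refl _).zpow_zpow j l)
      obtain ⟨i, hi⟩ := aux_pow hq hΩ _ _ hφu hc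
      exact ⟨i, hi.symm⟩
    let M : Subgroup G := Subgroup.zpowers (u * u)
    have hconj : ∀ g : G, g * (u * u) * g⁻¹ ∈ M := by
      intro g
      obtain ⟨i, hi⟩ := hPu g
      have hc : (g * u * g⁻¹) * (u ^ i)⁻¹ ∈ K.normalCore := by
        rw [hφker, MonoidHom.mem_ker, map_mul, map_inv, map_zpow, hi, mul_inv_cancel]
      refine ⟨i, ?_⟩
      set c := (g * u * g⁻¹) * (u ^ i)⁻¹ with hcdef
      have h1 : g * u * g⁻¹ = c * u ^ i := by rw [hcdef]; group
      have h2 : Commute c (u ^ i) := (hucC c hc).zpow_right i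
      have h3 : g * (u * u) * g⁻¹ = (g * u * g⁻¹) * (g * u * g⁻¹) := by group
      change (u * u) ^ i = _
      rw [h3, h1, h2.symm.mul_mul_mul_comm, hexp c hc, one_mul, (Commute.refl u).mul_zpow]
    have hMn : M.Normal := by
      refine ⟨?_⟩
      rintro n ⟨i, rfl⟩ g
      have := Subgroup.zpow_mem _ (hconj g) i
      rw [conj_zpow] at this
      exact this
    have huq : u ^ q ∈ K.normalCore := by
      rw [hφker, MonoidHom.mem_ker, map_pow, ← hφu, pow_orderOf_eq_one]
    have huu1 : u * u ≠ 1 := by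
      intro h
      have h1 : φ u ^ 2 = 1 := by rw [pow_two, ← map_mul, h, map_one]
      have h2 := orderOf_dvd_of_pow_eq_one h1
      rw [hφu] at h2
      have := Nat.le_of_dvd (by norm_num) h2
      omega
    have huuo : orderOf (u * u) = q := by
      apply orderOf_eq_prime _ huu1
      rw [(Commute.refl u).mul_pow]
      exact hexp _ huq
    have hMcard : Nat.card M = q := by rw [Nat.card_zpowers, huuo]
    have hMH : M ⊓ H = ⊥ := by
      rw [eq_bot_iff]
      rintro x ⟨⟨i, rfl⟩, hxH⟩
      change (u * u) ^ i ∈ H at hxH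
      have hcx : Commute (φ u) (φ ((u * u) ^ i)) :=
        Commute.map (((Commute.refl u).mul_right (Commute.refl u)).zpow_right i) φ
      have h1 := aux_fix hq hΩ _ _ hφu hcx ((1 : G) : G ⧸ K) (by
        change (((u * u) ^ i * 1 : G) : G ⧸ K) = _
        rw [QuotientGroup.eq]
        simpa using hHK hxH)
      have h2 : (u * u) ^ i ∈ K.normalCore := by rw [hφker]; exact h1
      have h3 := hexp _ h2
      have h4 : orderOf ((u * u) ^ i) ∣ 2 := orderOf_dvd_of_pow_eq_one (by rw [pow_two, h3])
      have h5 : orderOf ((u * u) ^ i) ∣ q := by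
        rw [← huuo]; exact orderOf_dvd_of_mem_zpowers ⟨i, rfl⟩
      have h6 : orderOf ((u * u) ^ i) = 1 := by
        rcases (Nat.dvd_prime hq).1 h5 with h | h
        · exact h
        · rw [h] at h4
          have := Nat.le_of_dvd (by norm_num) h4
          omega
      exact orderOf_eq_one_iff.1 h6
    refine ⟨M, hMn, ?_⟩
    have e1 : M.relIndex H = Nat.card H := by
      rw [← Subgroup.inf_relIndex_right, hMH, Subgroup.relIndex_bot_left]
    have e2 : M.relIndex (H ⊔ M) * (H ⊔ M).index = M.index :=
      Subgroup.relIndex_mul_index le_sup_right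
    rw [Subgroup.relIndex_sup_right, e1] at e2
    have e3 := M.card_mul_index
    have e4 := H.card_mul_index
    rw [← Subgroup.relIndex_mul_index hHK, hKH, hGK, ← e3, hMcard, ← e2] at e4
    have hHpos : 0 < Nat.card H := Nat.card_pos
    have e5 : (q * Nat.card H) * 2 = (q * Nat.card H) * (H ⊔ M).index := by
      rw [mul_assoc q, mul_assoc q, ← e4]; ring
    exact (Nat.eq_of_mul_eq_mul_left (Nat.mul_pos hq.pos hHpos) e5).symm
end
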